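/- arXiv:1605.00773 — 4 statements merged into one kernel-verified Lean document; each statement's English description precedes it below -/
import Mathlib

section
/- There exists n_0 such that for all n ≥ n_0 the following holds. Let H be a 3-graph on n vertices with δ(H) ≥ 0.799·C(n−1,2). Then for all pairs e = {u_0, u_1} ∈ G_{0.33} and f = {v_0, v_1} ∈ G_{0.33} with e ∩ f = ∅, there exists a tight path in H of length 12 connecting the endpairs (u_0, u_1) and (v_0, v_1). -/
open Finset
open scoped Classical

/-- The co-degree of a pair of vertices in a 3-graph `H`. -/
def coDeg {V : Type} [DecidableEq V] (H : Finset (Finset V)) (u v : V) : ℕ :=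
  (H.filter fun e => u ∈ e ∧ v ∈ e).card

/-- A tight path in a 3-graph `H`: a sequence of distinct vertices in which every three
consecutive vertices form an edge of `H`. -/
def IsTightPath {V : Type} [DecidableEq V] {t : ℕ} (H : Finset (Finset V))
    (w : Fin t → V) : Prop :=
  Function.Injective w ∧
    ∀ (i : ℕ) (hi : i + 2 < t),
      ({w ⟨i, by omega⟩, w ⟨i + 1, by omega⟩, w ⟨i + 2, by omega⟩} : Finset V) ∈ H

/-- ordered link pairs -/
def Lk {V : Type} [DecidableEq V] [Fintype V] (H : Finset (Finset V)) (x : V) : Finset (V × V) :=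
  univ.filter (fun p => ({x, p.1, p.2} : Finset V) ∈ H)

/-- neighbourhood of a pair -/
def Nb {V : Type} [DecidableEq V] [Fintype V] (H : Finset (Finset V)) (x y : V) : Finset V :=
  univ.filter (fun z => ({x, y, z} : Finset V) ∈ H)

lemma Lk_card {V : Type} [DecidableEq V] [Fintype V] (H : Finset (Finset V))
    (h3 : ∀ e ∈ H, e.card = 3) (x : V) :
    (H.filter fun e => x ∈ e).card * 2 ≤ (Lk H x).card := by
  have hm : ∀ p ∈ Lk H x, ({x, p.1, p.2} : Finset V) ∈ H.filter fun e => x ∈ e := by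
    intro p hp
    simp only [Lk, mem_filter, mem_univ, true_and] at hp
    simp [hp]
  rw [Finset.card_eq_sum_card_fiberwise hm, ← smul_eq_mul]
  apply Finset.card_nsmul_le_sum
  intro e he
  rw [mem_filter] at he
  have hc : (e.erase x).card = 2 := by rw [card_erase_of_mem he.2, h3 e he.1]
  obtain ⟨p, q, hpq, hE⟩ := Finset.card_eq_two.1 hc
  have e1 : e = {x, p, q} := by rw [← insert_erase he.2, hE]
  have e2 : e = {x, q, p} := by rw [e1]; ext; simp; tauto
  have : ({(p, q), (q, p)} : Finset (V × V)).card = 2 := by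
    rw [card_pair]; intro h; exact hpq (by simpa using congrArg Prod.fst h)
  rw [← this]
  apply card_le_card
  intro t ht
  simp only [mem_insert, mem_singleton] at ht
  simp only [Lk, mem_filter, mem_univ, true_and]
  rcases ht with rfl | rfl
  · exact ⟨e1 ▸ he.1, e1.symm⟩
  · exact ⟨e2 ▸ he.1, e2.symm⟩

lemma Nb_card {V : Type} [DecidableEq V] [Fintype V] (H : Finset (Finset V))
    (h3 : ∀ e ∈ H, e.card = 3) (x y : V) (hxy : x ≠ y) :
    coDeg H x y ≤ (Nb H x y).card := by
  have : (H.filter fun e => x ∈ e ∧ y ∈ e) ⊆ (Nb H x y).image fun z => {x, y, z} := by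
    intro e he
    rw [mem_filter] at he
    obtain ⟨he, hx, hy⟩ := he
    have hy' : y ∈ e.erase x := by simp [hy, hxy.symm]
    have hc : ((e.erase x).erase y).card = 1 := by
      rw [card_erase_of_mem hy', card_erase_of_mem hx, h3 e he]
    obtain ⟨z, hz⟩ := Finset.card_eq_one.1 hc
    have e1 : e = {x, y, z} := by rw [← insert_erase hx, ← insert_erase hy', hz]
    rw [mem_image]
    exact ⟨z, by simp [Nb, ← e1, he], e1.symm⟩
  exact (card_le_card this).trans card_image_le

lemma gap {V : Type} [DecidableEq V] [Fintype V] (P : Finset (V × V))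
    (hs : ∀ x y, (x, y) ∈ P → (y, x) ∈ P) (n : ℝ) (hn : (Fintype.card V : ℝ) = n)
    (hP : 0.7985 * n ^ 2 ≤ (P.card : ℝ)) (X Y : Finset V)
    (hXY : ∀ y ∈ Y, ((X.filter fun x => (x, y) ∈ P).card : ℝ) ≤ 0.001 * n) :
    2 * (X.card : ℝ) * Y.card - ((X ∩ Y).card : ℝ) ^ 2 ≤ 0.2035 * n ^ 2 := by
  have hn0 : 0 ≤ n := by rw [← hn]; positivity
  set T : Finset (V × V) := (X ×ˢ Y) ∩ P with hT
  have hTc : (T.card : ℝ) ≤ 0.001 * n ^ 2 := by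
    have hm : ∀ p ∈ T, p.2 ∈ Y := by
      intro p hp; simp [hT] at hp; tauto
    rw [Finset.card_eq_sum_card_fiberwise hm]
    push_cast
    calc _ ≤ ∑ y ∈ Y, 0.001 * n := by
          apply Finset.sum_le_sum
          intro y hy
          refine le_trans ?_ (hXY y hy)
          norm_cast
          refine Finset.card_le_card_of_injOn Prod.fst ?_ ?_
          · rintro ⟨p, q⟩ hp
            simp [hT] at hp ⊢
            obtain ⟨⟨⟨h1, h2⟩, h3⟩, rfl⟩ := hp
            exact ⟨h1, h3⟩
          · rintro ⟨p, q⟩ hp ⟨p', q'⟩ hp' h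
            simp [hT] at hp hp' h ⊢
            exact ⟨h, hp.2.trans hp'.2.symm⟩
      _ = Y.card * (0.001 * n) := by simp
      _ ≤ n * (0.001 * n) := by
          gcongr
          rw [← hn]; exact_mod_cast Finset.card_le_univ Y
      _ = _ := by ring
  set T' : Finset (V × V) := (Y ×ˢ X) ∩ P with hT'
  have hTT : T'.card ≤ T.card := by
    refine Finset.card_le_card_of_injOn Prod.swap ?_ (Prod.swap_injective.injOn)
    rintro ⟨p, q⟩ hp
    simp [hT, hT'] at hp ⊢
    exact ⟨⟨hp.1.2, hp.1.1⟩, hs _ _ hp.2⟩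
  have h1 : ((X ×ˢ Y ∪ Y ×ˢ X) ∪ P).card ≤ Fintype.card V * Fintype.card V := by
    rw [← Fintype.card_prod]; exact Finset.card_le_univ _
  have h2 := Finset.card_union_add_card_inter (X ×ˢ Y ∪ Y ×ˢ X) P
  have h3 := Finset.card_union_add_card_inter (X ×ˢ Y) (Y ×ˢ X)
  have h4 : ((X ×ˢ Y ∪ Y ×ˢ X) ∩ P).card ≤ T.card + T'.card := by
    rw [Finset.union_inter_distrib_right]; exact Finset.card_union_le _ _
  have h5 : (X ×ˢ Y ∩ Y ×ˢ X).card = (X ∩ Y).card * (X ∩ Y).card := by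
    rw [Finset.product_inter_product, Finset.inter_comm Y X, card_product]
  rw [card_product, card_product, h5] at h3
  have h1' : (((X ×ˢ Y ∪ Y ×ˢ X) ∪ P).card : ℝ) ≤ n * n := by rw [← hn]; exact_mod_cast h1
  have h2' : ((((X ×ˢ Y ∪ Y ×ˢ X) ∪ P).card : ℝ)) + ((X ×ˢ Y ∪ Y ×ˢ X) ∩ P).card
    = (X ×ˢ Y ∪ Y ×ˢ X).card + P.card := by exact_mod_cast h2
  have h3' : (((X ×ˢ Y ∪ Y ×ˢ X).card : ℝ)) + (X ∩ Y).card * (X ∩ Y).card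
    = X.card * Y.card + Y.card * X.card := by exact_mod_cast h3
  have h4' : (((X ×ˢ Y ∪ Y ×ˢ X) ∩ P).card : ℝ) ≤ T.card + T.card := by
    exact_mod_cast h4.trans (by omega)
  nlinarith

lemma half {V : Type} [DecidableEq V] [Fintype V] (P : Finset (V × V))
    (hs : ∀ x y, (x, y) ∈ P → (y, x) ∈ P) (n : ℝ) (hn : (Fintype.card V : ℝ) = n)
    (hP : 0.7985 * n ^ 2 ≤ (P.card : ℝ)) (B : Finset V) (hB : 0.32 * n ≤ (B.card : ℝ)) :
    ∃ C D : Finset V, 0.7 * n ≤ (D.card : ℝ) ∧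
      (∀ c ∈ C, 0.001 * n ≤ ((B.filter fun b => (b, c) ∈ P).card : ℝ)) ∧
      (∀ d ∈ D, 0.001 * n ≤ ((C.filter fun c => (c, d) ∈ P).card : ℝ)) := by
  have hn0 : 0 ≤ n := by rw [← hn]; positivity
  set C : Finset V := univ.filter fun c => 0.001 * n ≤ ((B.filter fun b => (b, c) ∈ P).card : ℝ)
    with hC
  set D : Finset V := univ.filter fun d => 0.001 * n ≤ ((C.filter fun c => (c, d) ∈ P).card : ℝ)
    with hD
  have key : ∀ x y t β γ : ℝ, 0 ≤ t → t ≤ x → t ≤ y → 0 ≤ β → β ≤ γ → β * n ≤ x →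
      0.2035 < γ ^ 2 → 0.2035 < 2 * β * γ - β ^ 2 → 2 * x * y - t ^ 2 ≤ 0.2035 * n ^ 2 →
      0 < n → y ≤ γ * n := by
    intro x y t β γ ht0 htx hty hβ hβγ hx h1 h2 h hn
    by_contra! hy
    have hn2 : 0 < n ^ 2 := by positivity
    have f1 := mul_lt_mul_of_pos_right h1 hn2
    have f2 := mul_lt_mul_of_pos_right h2 hn2
    have hγ : 0 ≤ γ * n := by nlinarith
    have hx0 : 0 ≤ x := ht0.trans htx
    have hy0 : 0 ≤ y := ht0.trans hty
    rcases le_total x (γ * n) with hc | hc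
    · have t2 : t ^ 2 ≤ x ^ 2 := by gcongr
      have a1 : 0 ≤ (x - β * n) * (2 * (γ * n) - x - β * n) :=
        mul_nonneg (by linarith) (by linarith)
      have a2 : 0 ≤ x * (y - γ * n) := mul_nonneg hx0 (by linarith)
      nlinarith
    · have t2 : t * t ≤ x * y := by gcongr
      have a1 : (γ * n) * (γ * n) ≤ x * y := by gcongr
      nlinarith
  have hCD : ∀ S : Finset V, (S.card : ℝ) = n - (univ \ S).card := by
    intro S
    have := Finset.card_sdiff_add_card_eq_card (Finset.subset_univ S)
    rw [Finset.card_univ] at this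
    rw [← hn, ← this]; push_cast; ring
  rcases hn0.eq_or_lt with h0 | hpos
  · refine ⟨∅, ∅, by simp [← h0], by simp, by simp⟩
  have g1 := gap P hs n hn hP B (univ \ C) (by
    intro y hy; simp [hC] at hy; linarith)
  have c1 : ((univ \ C).card : ℝ) ≤ 0.48 * n :=
    key B.card _ ((B ∩ (univ \ C)).card) 0.32 0.48 (Nat.cast_nonneg _)
      (by exact_mod_cast card_le_card inter_subset_left)
      (by exact_mod_cast card_le_card inter_subset_right) (by norm_num) (by norm_num) hB
      (by norm_num) (by norm_num) g1 hpos
  have c2 : 0.52 * n ≤ (C.card : ℝ) := by rw [hCD]; linarith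
  have g2 := gap P hs n hn hP C (univ \ D) (by
    intro y hy; simp [hD] at hy; linarith)
  refine ⟨C, D, ?_, ?_, ?_⟩
  · have tx : ((C ∩ (univ \ D)).card : ℝ) ≤ C.card := by
      exact_mod_cast card_le_card inter_subset_left
    have ty : ((C ∩ (univ \ D)).card : ℝ) ≤ (univ \ D).card := by
      exact_mod_cast card_le_card inter_subset_right
    have t0 : (0 : ℝ) ≤ ((C ∩ (univ \ D)).card : ℝ) := Nat.cast_nonneg _
    rw [hCD]
    generalize ((C ∩ (univ \ D)).card : ℝ) = t at *
    generalize ((univ \ D).card : ℝ) = y at *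
    generalize (C.card : ℝ) = x at *
    by_contra! hy
    have hn2 : 0 < n ^ 2 := by positivity
    have hx0 : 0 ≤ x := t0.trans tx
    have hy0 : 0 ≤ y := t0.trans ty
    rcases le_total y (0.52 * n) with hc | hc
    · have t2 : t ^ 2 ≤ y ^ 2 := by gcongr
      have a1 : 0 ≤ (y - 0.3 * n) * (0.52 * n - y) := mul_nonneg (by linarith) (by linarith)
      have a2 : 0 ≤ y * (x - 0.52 * n) := mul_nonneg hy0 (by linarith)
      nlinarith
    · have t2 : t * t ≤ x * y := by gcongr
      have a1 : (0.52 * n) * (0.52 * n) ≤ x * y := by gcongr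
      nlinarith
  · intro c hc; simpa [hC] using hc
  · intro c hc; simpa [hD] using hc

lemma pick {U ι : Type} [DecidableEq U] [Fintype U] (I : Finset ι) (S : ι → Finset U)
    (F : Finset U) (δ : ℝ) (hδ : 0 < δ) (hI : I.Nonempty) (hU : 0 < Fintype.card U)
    (hS : ∀ i ∈ I, 2 * δ * Fintype.card U ≤ ((S i).card : ℝ))
    (hF : (F.card : ℝ) ≤ δ * Fintype.card U) :
    ∃ x, x ∉ F ∧ ∃ J ⊆ I, J.Nonempty ∧ δ * I.card ≤ (J.card : ℝ) ∧ ∀ i ∈ J, x ∈ S i := by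
  have hS' : ∀ i ∈ I, δ * Fintype.card U ≤ ((S i \ F).card : ℝ) := by
    intro i hi
    have h1 := hS i hi
    have h2 : (S i).card ≤ (S i \ F).card + F.card := by
      have := Finset.le_card_sdiff F (S i); omega
    have h2' : ((S i).card : ℝ) ≤ (S i \ F).card + F.card := by exact_mod_cast h2
    linarith
  have hdc : ∑ x : U, (I.filter fun i => x ∈ S i \ F).card = ∑ i ∈ I, (S i \ F).card := by
    have := Finset.sum_card_bipartiteAbove_eq_sum_card_bipartiteBelow (s := (univ : Finset U))
      (t := I) (fun x i => x ∈ S i \ F)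
    simp only [bipartiteAbove, bipartiteBelow] at this
    rw [this]
    apply Finset.sum_congr rfl
    intro i _
    congr 1
    ext; simp
  have : ∃ x ∈ (univ : Finset U), δ * I.card ≤ ((I.filter fun i => x ∈ S i \ F).card : ℝ) := by
    apply Finset.exists_le_of_sum_le
    · exact Finset.card_pos.1 (by simpa using hU)
    · have : ∑ i ∈ I, δ * Fintype.card U ≤ ∑ i ∈ I, ((S i \ F).card : ℝ) :=
        Finset.sum_le_sum hS'
      have e : ∑ x : U, ((I.filter fun i => x ∈ S i \ F).card : ℝ)
        = ∑ i ∈ I, ((S i \ F).card : ℝ) := by exact_mod_cast hdc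
      rw [e]
      refine le_trans (le_of_eq ?_) this
      simp; ring
  obtain ⟨x, -, hx⟩ := this
  have hIp : (0 : ℝ) < I.card := by exact_mod_cast hI.card_pos
  have hJ : (I.filter fun i => x ∈ S i \ F).Nonempty := by
    apply Finset.card_pos.1
    have : (0 : ℝ) < ((I.filter fun i => x ∈ S i \ F).card : ℝ) := lt_of_lt_of_le (by positivity) hx
    exact_mod_cast this
  refine ⟨x, ?_, _, Finset.filter_subset _ _, hJ, hx, ?_⟩
  · obtain ⟨i, hi⟩ := hJ
    simp at hi
    exact hi.2.2
  · intro i hi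
    simp at hi
    exact hi.2.1

lemma Lk_symm {V : Type} [DecidableEq V] [Fintype V] (H : Finset (Finset V)) (a : V) :
    ∀ x y, (x, y) ∈ Lk H a → (y, x) ∈ Lk H a := by
  intro x y h
  simp only [Lk, mem_filter, mem_univ, true_and] at h ⊢
  rwa [Finset.pair_comm y x]

lemma goodA {V : Type} [DecidableEq V] [Fintype V] (H : Finset (Finset V))
    (n : ℝ) (hn : (Fintype.card V : ℝ) = n) (hn1 : 1000 ≤ n)
    (u₀ u₁ : V) (hP : 0.7985 * n ^ 2 ≤ ((Lk H u₁).card : ℝ))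
    (hc : 0.33 * (n - 2) ≤ ((Nb H u₀ u₁).card : ℝ)) :
    ∃ A : Finset V, 0.01 * n ≤ (A.card : ℝ) ∧ A ⊆ Nb H u₀ u₁ ∧
      ∀ a ∈ A, 0.32 * n ≤ ((Nb H a u₁).card : ℝ) := by
  set S : Finset V := univ.filter fun a => 0.32 * n ≤ ((Nb H a u₁).card : ℝ) with hS
  have h1 : (Lk H u₁).card = ∑ a : V, (Nb H a u₁).card := by
    rw [Finset.card_eq_sum_card_fiberwise (f := Prod.fst) (t := univ) (by simp)]
    apply Finset.sum_congr rfl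
    intro a _
    refine Finset.card_bij' (fun p _ => p.2) (fun b _ => (a, b)) ?_ ?_ ?_ ?_
    · rintro ⟨p, q⟩ h
      simp only [Lk, Nb, mem_filter, mem_univ, true_and] at h ⊢
      obtain ⟨h, rfl⟩ := h
      rwa [Finset.insert_comm]
    · intro q h
      simp only [Lk, Nb, mem_filter, mem_univ, true_and] at h ⊢
      rw [Finset.insert_comm]; exact ⟨h, trivial⟩
    · rintro ⟨p, q⟩ h
      simp only [mem_filter] at h
      simp [h.2]
    · intros; rfl
  have h2 : ((Lk H u₁).card : ℝ) ≤ ∑ a : V, (0.32 * n + if a ∈ S then 0.68 * n else 0) := by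
    rw [h1]; push_cast
    apply Finset.sum_le_sum
    intro a _
    have : ((Nb H a u₁).card : ℝ) ≤ n := by rw [← hn]; exact_mod_cast Finset.card_le_univ _
    split_ifs with h
    · linarith
    · have h' : ¬ (0.32 * n ≤ ((Nb H a u₁).card : ℝ)) := fun hh => h (by rw [hS, mem_filter]; exact ⟨mem_univ _, hh⟩)
      linarith
  have h3 : ∑ a : V, (0.32 * n + if a ∈ S then 0.68 * n else 0) = 0.32 * n * n + S.card * (0.68 * n) := by
    rw [Finset.sum_add_distrib, Finset.sum_const, Finset.sum_ite_mem, Finset.univ_inter,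
      Finset.sum_const, Finset.card_univ, nsmul_eq_mul, nsmul_eq_mul, hn]; ring
  have h4 : 0.7 * n ≤ S.card := by
    by_contra! h
    have : (S.card : ℝ) * (0.68 * n) ≤ (0.7 * n) * (0.68 * n) := by gcongr
    nlinarith
  refine ⟨Nb H u₀ u₁ ∩ S, ?_, inter_subset_left, ?_⟩
  · have h5 := Finset.card_union_add_card_inter (Nb H u₀ u₁) S
    have h5' : ((Nb H u₀ u₁ ∪ S).card : ℝ) + (Nb H u₀ u₁ ∩ S).card = (Nb H u₀ u₁).card + S.card := by
      exact_mod_cast h5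
    have h6 : ((Nb H u₀ u₁ ∪ S).card : ℝ) ≤ n := by
      rw [← hn]; exact_mod_cast Finset.card_le_univ _
    linarith
  · intro a ha
    have := (mem_inter.1 ha).2
    rw [hS, mem_filter] at this
    exact this.2

lemma choosePts {V : Type} [DecidableEq V] (K : ℕ) (A F : Finset V)
    (h : K + F.card ≤ A.card) :
    ∃ a : Fin K → V, Function.Injective a ∧ (∀ i, a i ∈ A) ∧ ∀ i, a i ∉ F := by
  have h1 : K ≤ (A \ F).card := by
    have := Finset.le_card_sdiff F A; omega
  obtain ⟨B, hB, hBc⟩ := Finset.exists_subset_card_eq h1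
  refine ⟨fun i => ((B.equivFinOfCardEq hBc).symm i : V), ?_, ?_, ?_⟩
  · intro i j hij
    simpa using Subtype.ext hij
  · intro i
    exact (mem_sdiff.1 (hB ((B.equivFinOfCardEq hBc).symm i).2)).1
  · intro i
    exact (mem_sdiff.1 (hB ((B.equivFinOfCardEq hBc).symm i).2)).2

lemma pairs {V : Type} [DecidableEq V] [Fintype V] (n : ℝ) (hn : (Fintype.card V : ℝ) = n)
    (hn1 : 0 ≤ n)
    (P Q : Finset (V × V)) (hP : 0.7985 * n ^ 2 ≤ (P.card : ℝ)) (hQ : 0.7985 * n ^ 2 ≤ (Q.card : ℝ))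
    (D E : Finset V) (hD : 0.7 * n ≤ (D.card : ℝ)) (hE : 0.7 * n ≤ (E.card : ℝ)) :
    0.08 * n ^ 2 ≤ (((D ×ˢ E) ∩ (P ∩ Q)).card : ℝ) := by
  have h1 := Finset.card_union_add_card_inter P Q
  have h2 := Finset.card_union_add_card_inter (D ×ˢ E) (P ∩ Q)
  have u : ∀ S : Finset (V × V), (S.card : ℝ) ≤ n ^ 2 := by
    intro S
    have := Finset.card_le_univ S
    rw [Fintype.card_prod] at this
    rw [← hn, pow_two]; exact_mod_cast this
  have h1' : ((P ∪ Q).card : ℝ) + (P ∩ Q).card = P.card + Q.card := by exact_mod_cast h1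
  have h2' : ((D ×ˢ E ∪ (P ∩ Q)).card : ℝ) + (D ×ˢ E ∩ (P ∩ Q)).card
    = D.card * E.card + (P ∩ Q).card := by rw [← Nat.cast_mul, ← card_product]; exact_mod_cast h2
  have h3 : (0.7 * n) * (0.7 * n) ≤ (D.card : ℝ) * E.card := by gcongr
  have := u (P ∪ Q)
  have := u (D ×ˢ E ∪ (P ∩ Q))
  nlinarith

lemma pickV {V : Type} {ι : Type} [DecidableEq V] [Fintype V] (n : ℝ)
    (hn : (Fintype.card V : ℝ) = n) (hn0 : 0 < n) (I : Finset ι) (S : ι → Finset V)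
    (F : Finset V) (hI : I.Nonempty)
    (hS : ∀ i ∈ I, 0.001 * n ≤ ((S i).card : ℝ))
    (k : ℕ) (hk : F.card ≤ k) (hF : (k : ℝ) ≤ 0.0005 * n) :
    ∃ x, x ∉ F ∧ ∃ J ⊆ I, J.Nonempty ∧ 0.0005 * I.card ≤ (J.card : ℝ) ∧ ∀ i ∈ J, x ∈ S i := by
  refine pick I S F 0.0005 (by norm_num) hI ?_ ?_ ?_
  · have : (0 : ℝ) < Fintype.card V := by rw [hn]; exact hn0
    exact_mod_cast this
  · intro i hi
    rw [hn]; have := hS i hi; linarith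
  · rw [hn]
    exact le_trans (by exact_mod_cast hk) hF

lemma badPairs {V : Type} [DecidableEq V] [Fintype V] (F : Finset V) :
    ((F ×ˢ (univ : Finset V)) ∪ ((univ : Finset V) ×ˢ F)).card ≤ 2 * F.card * Fintype.card V := by
  refine (card_union_le _ _).trans ?_
  rw [card_product, card_product, Finset.card_univ]
  apply le_of_eq; ring

lemma fin14 {V : Type} [DecidableEq V] (H : Finset (Finset V))
    (u₀ u₁ a b c a' d e z' f g z v₁ v₀ : V)
    (hnd : [u₀, u₁, a, b, c, a', d, e, z', f, g, z, v₁, v₀].Nodup)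
    (E1 : {u₀, u₁, a} ∈ H) (E2 : {a, u₁, b} ∈ H) (E3 : {a, b, c} ∈ H) (E4 : {a', b, c} ∈ H)
    (E5 : {a', c, d} ∈ H) (E6 : {a', d, e} ∈ H) (E7 : {z', d, e} ∈ H) (E8 : {z', f, e} ∈ H)
    (E9 : {z', g, f} ∈ H) (E10 : {z, g, f} ∈ H) (E11 : {z, v₁, g} ∈ H) (E12 : {v₀, v₁, z} ∈ H) :
    ∃ w : Fin 14 → V, IsTightPath H w ∧
        w 0 = u₀ ∧ w 1 = u₁ ∧ w 13 = v₀ ∧ w 12 = v₁ := by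
  have perm : ∀ {x y z p q r : V}, ({x, y, z} : Finset V) ∈ H →
      (∀ t, (t = p ∨ t = q ∨ t = r) ↔ (t = x ∨ t = y ∨ t = z)) → ({p, q, r} : Finset V) ∈ H := by
    intro x y z p q r hS h
    have : ({p, q, r} : Finset V) = {x, y, z} := by
      ext t; simpa only [mem_insert, mem_singleton] using h t
    rwa [this]
  refine ⟨[u₀, u₁, a, b, c, a', d, e, z', f, g, z, v₁, v₀].get,
    ⟨List.nodup_iff_injective_get.1 hnd, ?_⟩, rfl, rfl, rfl, rfl⟩
  intro k hk
  have hk' : k < 12 := by omega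
  have G1 : ({u₀, u₁, a} : Finset V) ∈ H := perm E1 (by intro x; tauto)
  have G2 : ({u₁, a, b} : Finset V) ∈ H := perm E2 (by intro x; tauto)
  have G3 : ({a, b, c} : Finset V) ∈ H := perm E3 (by intro x; tauto)
  have G4 : ({b, c, a'} : Finset V) ∈ H := perm E4 (by intro x; tauto)
  have G5 : ({c, a', d} : Finset V) ∈ H := perm E5 (by intro x; tauto)
  have G6 : ({a', d, e} : Finset V) ∈ H := perm E6 (by intro x; tauto)
  have G7 : ({d, e, z'} : Finset V) ∈ H := perm E7 (by intro x; tauto)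
  have G8 : ({e, z', f} : Finset V) ∈ H := perm E8 (by intro x; tauto)
  have G9 : ({z', f, g} : Finset V) ∈ H := perm E9 (by intro x; tauto)
  have G10 : ({f, g, z} : Finset V) ∈ H := perm E10 (by intro x; tauto)
  have G11 : ({g, z, v₁} : Finset V) ∈ H := perm E11 (by intro x; tauto)
  have G12 : ({z, v₁, v₀} : Finset V) ∈ H := perm E12 (by intro x; tauto)
  clear perm E1 E2 E3 E4 E5 E6 E7 E8 E9 E10 E11 E12
  interval_cases k
  · exact G1
  · exact G2
  · exact G3
  · exact G4
  · exact G5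
  · exact G6
  · exact G7
  · exact G8
  · exact G9
  · exact G10
  · exact G11
  · exact G12

lemma core {V : Type} [DecidableEq V] [Fintype V] (H : Finset (Finset V))
    (h3 : ∀ e ∈ H, e.card = 3)
    (n : ℝ) (hn : (Fintype.card V : ℝ) = n) (K : ℕ)
    (hK : 2 ≤ 0.0005 ^ 4 * 0.04 * (K : ℝ))
    (hn1 : 10000 * (2 * (K : ℝ) + 10) ≤ n)
    (hP : ∀ x, 0.7985 * n ^ 2 ≤ ((Lk H x).card : ℝ))
    (u₀ u₁ v₀ v₁ : V) (hu : u₀ ≠ u₁) (hv : v₀ ≠ v₁) (h00 : u₀ ≠ v₀) (h01 : u₀ ≠ v₁)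
    (h10 : u₁ ≠ v₀) (h11 : u₁ ≠ v₁)
    (hcu : 0.33 * (n - 2) ≤ ((Nb H u₀ u₁).card : ℝ))
    (hcv : 0.33 * (n - 2) ≤ ((Nb H v₀ v₁).card : ℝ)) :
    ∃ w : Fin 14 → V, IsTightPath H w ∧
        w 0 = u₀ ∧ w 1 = u₁ ∧ w 13 = v₀ ∧ w 12 = v₁ := by
  have hK0 : (0 : ℝ) ≤ K := by positivity
  have hn0 : 0 < n := by linarith
  obtain ⟨A, hA, hAs, hAb⟩ := goodA H n hn (by linarith) u₀ u₁ (hP _) hcu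
  obtain ⟨Z, hZ, hZs, hZb⟩ := goodA H n hn (by linarith) v₀ v₁ (hP _) hcv
  set F₁ : Finset V := {u₀, u₁, v₀, v₁} with hF₁
  have hF₁c : F₁.card ≤ 4 := Finset.card_le_four
  obtain ⟨a, ainj, aA, aF⟩ := choosePts K A F₁ (by
    have : ((K + 4 : ℕ) : ℝ) ≤ A.card := by push_cast; linarith
    have : K + 4 ≤ A.card := by exact_mod_cast this
    omega)
  set F₂ : Finset V := F₁ ∪ univ.image a with hF₂
  have hF₂c : F₂.card ≤ 4 + K := by
    refine (card_union_le _ _).trans ?_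
    have := (card_image_le (s := univ) (f := a)); simp at this; omega
  obtain ⟨z, zinj, zZ, zF⟩ := choosePts K Z F₂ (by
    have : ((K + (4 + K) : ℕ) : ℝ) ≤ Z.card := by push_cast; linarith
    have : K + (4 + K) ≤ Z.card := by exact_mod_cast this
    omega)
  set F₃ : Finset V := F₂ ∪ univ.image z with hF₃
  have hF₃c : F₃.card ≤ 4 + 2 * K := by
    refine (card_union_le _ _).trans ?_
    have := (card_image_le (s := univ) (f := z)); simp at this; omega
  choose C D hD hC1 hD1 using fun i => half (Lk H (a i)) (Lk_symm H _) n hn (hP _)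
    (Nb H (a i) u₁) (hAb _ (aA i))
  choose C' E hE hC2 hE1 using fun i => half (Lk H (z i)) (Lk_symm H _) n hn (hP _)
    (Nb H (z i) v₁) (hZb _ (zZ i))
  have hKpos : 0 < K := by
    rcases Nat.eq_zero_or_pos K with h | h
    · subst h; norm_num at hK
    · exact h
  have : Nonempty (Fin K) := ⟨⟨0, hKpos⟩⟩
  have cU : (Fintype.card (V × V) : ℝ) = n ^ 2 := by
    rw [Fintype.card_prod]; push_cast; rw [hn]; ring
  obtain ⟨⟨d, e⟩, hde, J1, -, hJ1, hJ1c, hJ1m⟩ := pick (univ : Finset (Fin K))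
    (fun i => (D i ×ˢ E i) ∩ (Lk H (a i) ∩ Lk H (z i)))
    ((F₃ ×ˢ (univ : Finset V)) ∪ ((univ : Finset V) ×ˢ F₃)) 0.04 (by norm_num) univ_nonempty
    (by
      have : (0 : ℝ) < Fintype.card (V × V) := by rw [cU]; positivity
      exact_mod_cast this)
    (by
      intro i _
      have := pairs n hn hn0.le _ _ (hP (a i)) (hP (z i)) (D i) (E i) (hD i) (hE i)
      rw [cU]; linarith)
    (by
      have h := badPairs F₃
      have h' : ((((F₃ ×ˢ (univ : Finset V)) ∪ ((univ : Finset V) ×ˢ F₃)).card : ℕ) : ℝ)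
        ≤ 2 * F₃.card * n := by rw [← hn]; exact_mod_cast h
      have h4 : (F₃.card : ℝ) ≤ 4 + 2 * K := by exact_mod_cast hF₃c
      rw [cU]
      have : (F₃.card : ℝ) ≤ 0.02 * n := by linarith
      nlinarith)
  simp only [mem_union, mem_product, mem_univ, and_true, true_and, not_or] at hde
  simp only [mem_inter, mem_product] at hJ1m
  set F₄ := insert d (insert e F₃) with hF₄
  have hF₄c : F₄.card ≤ 6 + 2 * K := by
    have h1 : F₄.card ≤ (insert e F₃).card + 1 := card_insert_le d (insert e F₃)
    have h2 := card_insert_le e F₃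
    omega
  obtain ⟨c, hc, J2, hJ2s, hJ2, hJ2c, hJ2m⟩ := pickV n hn hn0 J1
    (fun i => (C i).filter fun c => (c, d) ∈ Lk H (a i)) F₄ hJ1
    (fun i hi => hD1 i d (hJ1m i hi).1.1) _ hF₄c (by push_cast; linarith)
  simp only [mem_filter] at hJ2m
  set F₅ := insert c F₄ with hF₅
  have hF₅c : F₅.card ≤ 7 + 2 * K := by
    have h1 : F₅.card ≤ F₄.card + 1 := card_insert_le c F₄
    omega
  obtain ⟨b, hb, J3, hJ3s, hJ3, hJ3c, hJ3m⟩ := pickV n hn hn0 J2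
    (fun i => (Nb H (a i) u₁).filter fun b => (b, c) ∈ Lk H (a i)) F₅ hJ2
    (fun i hi => hC1 i c (hJ2m i hi).1) _ hF₅c (by push_cast; linarith)
  simp only [mem_filter] at hJ3m
  set F₆ := insert b F₅ with hF₆
  have hF₆c : F₆.card ≤ 8 + 2 * K := by
    have h1 : F₆.card ≤ F₅.card + 1 := card_insert_le b F₅
    omega
  obtain ⟨f, hf, J4, hJ4s, hJ4, hJ4c, hJ4m⟩ := pickV n hn hn0 J3
    (fun i => (C' i).filter fun f => (f, e) ∈ Lk H (z i)) F₆ hJ3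
    (fun i hi => hE1 i e (hJ1m i (hJ2s (hJ3s hi))).1.2) _ hF₆c (by push_cast; linarith)
  simp only [mem_filter] at hJ4m
  set F₇ := insert f F₆ with hF₇
  have hF₇c : F₇.card ≤ 9 + 2 * K := by
    have h1 : F₇.card ≤ F₆.card + 1 := card_insert_le f F₆
    omega
  obtain ⟨g, hg, J5, hJ5s, hJ5, hJ5c, hJ5m⟩ := pickV n hn hn0 J4
    (fun i => (Nb H (z i) v₁).filter fun g => (g, f) ∈ Lk H (z i)) F₇ hJ4
    (fun i hi => hC2 i f (hJ4m i hi).1) _ hF₇c (by push_cast; linarith)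
  simp only [mem_filter] at hJ5m
  have hJ5two : 1 < J5.card := by
    have : (2 : ℝ) ≤ J5.card := by
      rw [Finset.card_univ, Fintype.card_fin] at hJ1c
      norm_num at hK hJ1c hJ2c hJ3c hJ4c hJ5c
      linarith
    have : 2 ≤ J5.card := by exact_mod_cast this
    omega
  obtain ⟨i, hi, j, hj, hij⟩ := Finset.one_lt_card.1 hJ5two
  have hm : ∀ k ∈ J5, k ∈ J1 ∧ k ∈ J2 ∧ k ∈ J3 ∧ k ∈ J4 := fun k hk =>
    ⟨hJ2s (hJ3s (hJ4s (hJ5s hk))), hJ3s (hJ4s (hJ5s hk)), hJ4s (hJ5s hk), hJ5s hk⟩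
  obtain ⟨i1, i2, i3, i4⟩ := hm i hi
  obtain ⟨j1, j2, j3, j4⟩ := hm j hj
  have E1 := hAs (aA i)
  have E2 := (hJ3m i i3).1
  have E3 := (hJ3m i i3).2
  have E4 := (hJ3m j j3).2
  have E5 := (hJ2m j j2).2
  have E6 := (hJ1m j j1).2.1
  have E7 := (hJ1m j j1).2.2
  have E8 := (hJ4m j j4).2
  have E9 := (hJ5m j hj).2
  have E10 := (hJ5m i hi).2
  have E11 := (hJ5m i hi).1
  have E12 := hZs (zZ i)
  simp only [Lk, Nb, mem_filter, mem_univ, true_and] at E1 E2 E3 E4 E5 E6 E7 E8 E9 E10 E11 E12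
  have hned : d ≠ e := by
    rintro rfl
    have h := h3 _ E6
    have h2 : ({a j, d, d} : Finset V).card ≤ 2 := by
      rw [Finset.pair_eq_singleton]; exact Finset.card_le_two
    omega
  have naij : a i ≠ a j := fun h => hij (ainj h)
  have nzij : z i ≠ z j := fun h => hij (zinj h)
  have nd := hde.1
  have ne := hde.2
  have ai := aF i
  have aj := aF j
  have zi := zF i
  have zj := zF j
  have expand : ∀ x, x ∉ F₃ → (x ≠ u₀ ∧ x ≠ u₁ ∧ x ≠ v₀ ∧ x ≠ v₁) ∧ (x ≠ a i ∧ x ≠ a j) ∧ (x ≠ z i ∧ x ≠ z j) := by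
    intro x hx
    simp only [hF₃, hF₂, hF₁, mem_union, mem_insert, mem_singleton, mem_image, mem_univ, true_and,
      not_or, not_exists] at hx
    obtain ⟨⟨⟨q1, q2, q3, q4⟩, q5⟩, q6⟩ := hx
    exact ⟨⟨q1, q2, q3, q4⟩, ⟨fun h => q5 i h.symm, fun h => q5 j h.symm⟩,
      ⟨fun h => q6 i h.symm, fun h => q6 j h.symm⟩⟩
  have expand2 : ∀ x, x ∉ F₂ → (x ≠ u₀ ∧ x ≠ u₁ ∧ x ≠ v₀ ∧ x ≠ v₁) ∧ (x ≠ a i ∧ x ≠ a j) := by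
    intro x hx
    simp only [hF₂, hF₁, mem_union, mem_insert, mem_singleton, mem_image, mem_univ, true_and,
      not_or, not_exists] at hx
    obtain ⟨⟨q1, q2, q3, q4⟩, q5⟩ := hx
    exact ⟨⟨q1, q2, q3, q4⟩, ⟨fun h => q5 i h.symm, fun h => q5 j h.symm⟩⟩
  simp only [hF₇, hF₆, hF₅, hF₄, mem_insert, not_or] at hc hb hf hg
  obtain ⟨hc1, hc2, hc3⟩ := hc
  obtain ⟨hb1, hb2, hb3, hb4⟩ := hb
  obtain ⟨hf1, hf2, hf3, hf4, hf5⟩ := hf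
  obtain ⟨hg1, hg2, hg3, hg4, hg5, hg6⟩ := hg
  replace nd := expand _ nd
  replace ne := expand _ ne
  replace hc3 := expand _ hc3
  replace hb4 := expand _ hb4
  replace hf5 := expand _ hf5
  replace hg6 := expand _ hg6
  replace zi := expand2 _ zi
  replace zj := expand2 _ zj
  simp only [hF₁, mem_insert, mem_singleton, not_or] at ai aj
  clear_value F₁ F₂ F₃ F₄ F₅ F₆ F₇
  clear hF₁ hF₂ hF₃ hF₄ hF₅ hF₆ hF₇ expand expand2 hJ1m hJ2m hJ3m hJ4m hJ5m hm hC1 hC2 hD1 hE1 hD hE hP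
    hA hZ hAb hZb hAs hZs aA zZ aF zF ainj zinj
  exact fin14 H _ _ _ _ _ _ _ _ _ _ _ _ _ _ (by
    simp only [List.nodup_cons, List.mem_cons, List.not_mem_nil, or_false, not_or,
      List.nodup_nil, not_false_eq_true, and_true]
    simp only [ne_eq] at *
    grind)
    E1 E2 E3 E4 E5 E6 E7 E8 E9 E10 E11 E12

/-- Connecting Lemma: there is `n₀` such that in every 3-graph on `n ≥ n₀` vertices with
minimum vertex degree at least `0.799·C(n-1,2)`, any two disjoint `0.33`-large pairs
`(u₀,u₁)` and `(v₀,v₁)` are connected by a tight path of length 12 (i.e. on 14 vertices)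
with these endpairs. -/
theorem stmt_9 :
    ∃ n₀ : ℕ, ∀ n : ℕ, n₀ ≤ n →
    ∀ (V : Type) [DecidableEq V] [Fintype V], Fintype.card V = n →
    ∀ H : Finset (Finset V), (∀ e ∈ H, e.card = 3) →
    (∀ v : V, (0.799 : ℝ) * ((n - 1).choose 2 : ℝ) ≤
      ((H.filter fun e => v ∈ e).card : ℝ)) →
    ∀ u₀ u₁ v₀ v₁ : V, u₀ ≠ u₁ → v₀ ≠ v₁ →
      u₀ ≠ v₀ → u₀ ≠ v₁ → u₁ ≠ v₀ → u₁ ≠ v₁ →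
      (0.33 : ℝ) * ((n : ℝ) - 2) ≤ (coDeg H u₀ u₁ : ℝ) →
      (0.33 : ℝ) * ((n : ℝ) - 2) ≤ (coDeg H v₀ v₁ : ℝ) →
      ∃ w : Fin 14 → V, IsTightPath H w ∧
        w 0 = u₀ ∧ w 1 = u₁ ∧ w 13 = v₀ ∧ w 12 = v₁ := by
  obtain ⟨K, hK⟩ := exists_nat_gt (2 / (0.0005 ^ 4 * 0.04) : ℝ)
  refine ⟨10000 * (2 * K + 10), ?_⟩
  intro n hn V _ _ hV H h3 hdeg u₀ u₁ v₀ v₁ hu hv h00 h01 h10 h11 hcu hcv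
  have hnR : ((10000 * (2 * K + 10) : ℕ) : ℝ) ≤ n := by exact_mod_cast hn
  push_cast at hnR
  have hK0 : (0 : ℝ) ≤ K := Nat.cast_nonneg _
  refine core H h3 n (by exact_mod_cast hV) K ?_ hnR ?_ u₀ u₁ v₀ v₁ hu hv h00 h01 h10 h11 ?_ ?_
  · rw [div_lt_iff₀ (by norm_num)] at hK
    linarith
  · intro x
    have h1 : (((H.filter fun e => x ∈ e).card : ℝ)) * 2 ≤ (Lk H x).card := by
      exact_mod_cast Lk_card H h3 x
    have h2 := hdeg x
    rw [Nat.cast_choose_two, Nat.cast_sub (by omega)] at h2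
    push_cast at h2
    have hn' : (100000 : ℝ) ≤ n := by linarith
    nlinarith
  · exact hcu.trans (by exact_mod_cast Nb_card H h3 u₀ u₁ hu)
  · exact hcv.trans (by exact_mod_cast Nb_card H h3 v₀ v₁ hv)
end

section
/- There exists c > 0 such that for all sufficiently large n the following holds. Let H be a 3-graph on n vertices with δ(H) ≥ 0.8·C(n−1,2) and let x be any vertex of H. Then: (a) |T^x| ≥ 0.296262·C(n−1,3); (b) |T^x ∩ H'| ≥ 0.005·C(n−1,3); (c) the 3-graph T^x ∩ H' contains at least c·n^6 copies of K_{2,2,2}. -/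
open Finset
open scoped Classical

/-- The subhypergraph `H'` of `H` consisting of all edges containing at least one
`(1/3)`-large pair, i.e. a pair of co-degree at least `(1/3)(n-2)`. -/
noncomputable def largeSub {V : Type} [DecidableEq V] [Fintype V]
    (H : Finset (Finset V)) : Finset (Finset V) :=
  H.filter fun e => ∃ u ∈ e, ∃ v ∈ e, u ≠ v ∧
    (1 / 3 : ℝ) * ((Fintype.card V : ℝ) - 2) ≤ (coDeg H u v : ℝ)

/-- `T^x`: the family of vertex sets of triangles in the link graph of `x` in `H'`, i.e.
3-element sets all of whose pairs together with `x` form edges of `H'`. -/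
noncomputable def triLink {V : Type} [DecidableEq V] [Fintype V]
    (H : Finset (Finset V)) (x : V) : Finset (Finset V) :=
  ((Finset.univ : Finset V).powersetCard 3).filter fun s =>
    ∀ p ∈ s.powersetCard 2, insert x p ∈ largeSub H

/-- The (ordered) copies of `K_{h,h,h}` in a 3-graph `H`. -/
noncomputable def tripartiteCopies {V : Type} [DecidableEq V] [Fintype V]
    (H : Finset (Finset V)) (h : ℕ) : Finset (Finset V × Finset V × Finset V) :=
  Finset.univ.filter fun T =>
    T.1.card = h ∧ T.2.1.card = h ∧ T.2.2.card = h ∧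
    Disjoint T.1 T.2.1 ∧ Disjoint T.1 T.2.2 ∧ Disjoint T.2.1 T.2.2 ∧
    ∀ a ∈ T.1, ∀ b ∈ T.2.1, ∀ c ∈ T.2.2, ({a, b, c} : Finset V) ∈ H

section helpers
variable {V : Type} [DecidableEq V] [Fintype V]

/-- Ordered indicator. -/
noncomputable def ind3 (F : Finset (Finset V)) (a b c : V) : ℝ :=
  if ({a, b, c} : Finset V) ∈ F then 1 else 0

lemma ind3_nonneg (F : Finset (Finset V)) (a b c : V) : 0 ≤ ind3 F a b c := by
  unfold ind3; split_ifs <;> norm_num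

lemma ind3_le_one (F : Finset (Finset V)) (a b c : V) : ind3 F a b c ≤ 1 := by
  unfold ind3; split_ifs <;> norm_num

lemma ind3_swap (F : Finset (Finset V)) (a b c : V) : ind3 F a b c = ind3 F a c b := by
  unfold ind3; rw [Finset.pair_comm b c]

lemma card3_ne {a b c : V} (h : ({a, b, c} : Finset V).card = 3) : a ≠ b ∧ a ≠ c ∧ b ≠ c := by
  refine ⟨?_, ?_, ?_⟩
  · rintro rfl
    have := Finset.card_le_two (a := a) (b := c)
    simp at h; omega
  · rintro rfl
    have h2 : ({a, b, a} : Finset V) = {a, b} := by ext; simp; tauto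
    have := Finset.card_le_two (a := a) (b := b)
    rw [h2] at h; omega
  · rintro rfl
    have := Finset.card_le_two (a := a) (b := b)
    simp at h; omega

lemma ordered_le (F : Finset (Finset V)) (hF : ∀ e ∈ F, e.card = 3) :
    ∑ a, ∑ b, ∑ c, ind3 F a b c ≤ 6 * (F.card : ℝ) := by
  have h1 : ∑ a, ∑ b, ∑ c, ind3 F a b c =
      (((univ : Finset (V × V × V)).filter fun t => ({t.1, t.2.1, t.2.2} : Finset V) ∈ F).card : ℝ) := by
    rw [Finset.card_filter]
    push_cast
    rw [Fintype.sum_prod_type]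
    refine Finset.sum_congr rfl fun a _ => ?_
    rw [Fintype.sum_prod_type]
    rfl
  rw [h1]
  have := Finset.card_le_mul_card_image_of_maps_to
    (s := (univ : Finset (V × V × V)).filter fun t => ({t.1, t.2.1, t.2.2} : Finset V) ∈ F)
    (t := F) (f := fun t => ({t.1, t.2.1, t.2.2} : Finset V))
    (by intro t ht; simpa using ht) 6 ?_
  · exact_mod_cast this
  · intro e he
    obtain ⟨p, q, r, hpq, hpr, hqr, rfl⟩ := Finset.card_eq_three.1 (hF e he)
    refine le_trans (Finset.card_le_card (t := {(p,q,r),(p,r,q),(q,p,r),(q,r,p),(r,p,q),(r,q,p)}) ?_)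
      Finset.card_le_six
    rintro ⟨a, b, c⟩ ht
    simp only [Finset.mem_filter, Finset.mem_univ, true_and] at ht
    have h3 := ht.2
    have hc := hF _ ht.1
    obtain ⟨hab, hac, hbc⟩ := card3_ne hc
    have ha : a ∈ ({p, q, r} : Finset V) := by rw [← h3]; simp
    have hb : b ∈ ({p, q, r} : Finset V) := by rw [← h3]; simp
    have hcc : c ∈ ({p, q, r} : Finset V) := by rw [← h3]; simp
    simp only [Finset.mem_insert, Finset.mem_singleton] at ha hb hcc
    simp only [Finset.mem_insert, Finset.mem_singleton, Prod.mk.injEq]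
    rcases ha with rfl | rfl | rfl <;> rcases hb with rfl | rfl | rfl <;>
      rcases hcc with rfl | rfl | rfl <;> simp_all

lemma ordered_deg (F : Finset (Finset V)) (hF : ∀ e ∈ F, e.card = 3) (x : V) :
    2 * ((F.filter fun e => x ∈ e).card : ℝ) ≤ ∑ a, ∑ b, ind3 F x a b := by
  have h1 : ∑ a, ∑ b, ind3 F x a b =
      (((univ : Finset (V × V)).filter fun t => ({x, t.1, t.2} : Finset V) ∈ F).card : ℝ) := by
    rw [Finset.card_filter]
    push_cast
    rw [Fintype.sum_prod_type]
    rfl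
  rw [h1]
  have := Finset.mul_card_image_le_card_of_maps_to
    (s := (univ : Finset (V × V)).filter fun t => ({x, t.1, t.2} : Finset V) ∈ F)
    (t := F.filter fun e => x ∈ e) (f := fun t => ({x, t.1, t.2} : Finset V))
    (by intro t ht; simpa using ht) 2 ?_
  · exact_mod_cast this
  · intro e he
    simp only [Finset.mem_filter] at he
    obtain ⟨heF, hx⟩ := he
    have hc : (e.erase x).card = 2 := by rw [Finset.card_erase_of_mem hx, hF e heF]
    obtain ⟨p, q, hpq, hpqe⟩ := Finset.card_eq_two.1 hc
    have he : e = {x, p, q} := by rw [← hpqe, Finset.insert_erase hx]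
    have h2 : ({(p,q),(q,p)} : Finset (V × V)).card = 2 := by
      rw [Finset.card_pair]; simp [hpq]
    rw [← h2]
    apply Finset.card_le_card
    intro t ht
    simp only [Finset.mem_insert, Finset.mem_singleton] at ht
    rcases ht with rfl | rfl
    · simp [← he, heF]
    · simp [Finset.pair_comm q p, ← he, heF]

lemma codeg_ge (F : Finset (Finset V)) (hF : ∀ e ∈ F, e.card = 3) (x v : V) :
    ∑ b, ind3 F x v b ≤ (coDeg F x v : ℝ) := by
  unfold ind3 coDeg
  rw [← Finset.sum_filter, Finset.sum_const, nsmul_eq_mul, mul_one]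
  norm_cast
  refine Finset.card_le_card_of_injOn (fun b => ({x, v, b} : Finset V)) ?_ ?_
  · intro b hb
    simp at hb
    simp [hb]
  · intro b hb b' hb' h
    simp only [Finset.coe_filter, Finset.mem_univ, true_and, Set.mem_setOf_eq] at hb hb'
    obtain ⟨h1, h2, h3⟩ := card3_ne (hF _ hb)
    have : b ∈ ({x, v, b'} : Finset V) := by
      rw [← show ({x, v, b} : Finset V) = {x, v, b'} from h]; simp
    simp only [Finset.mem_insert, Finset.mem_singleton] at this
    rcases this with rfl | rfl | h
    · exact absurd rfl h2
    · exact absurd rfl h3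
    · exact h

lemma largeSub_card {H : Finset (Finset V)} (hH : ∀ e ∈ H, e.card = 3) :
    ∀ e ∈ largeSub H, e.card = 3 := fun e he => hH e (Finset.mem_filter.1 he).1

lemma link_dense (H : Finset (Finset V)) (hH : ∀ e ∈ H, e.card = 3) (x : V) (n : ℝ)
    (hn : (Fintype.card V : ℝ) = n) (hn1 : 10 ^ 20 ≤ n)
    (hd : 0.8 * ((n - 1) * (n - 2)) ≤ ∑ a, ∑ b, ind3 H x a b) :
    0.7099 * n ^ 2 ≤ ∑ a, ∑ b, ind3 (largeSub H) x a b := by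
  set S : Finset V := univ.filter fun v => ∑ b, ind3 H x v b < (1/3) * (n - 2) with hS
  have key : ∀ v w, ind3 H x v w ≤ ind3 (largeSub H) x v w +
      (if v ∈ S then 1 else 0) * (if w ∈ S then (1:ℝ) else 0) := by
    intro v w
    by_cases h1 : ({x, v, w} : Finset V) ∈ H
    · by_cases h2 : ({x, v, w} : Finset V) ∈ largeSub H
      · have : (0:ℝ) ≤ (if v ∈ S then 1 else 0) * (if w ∈ S then (1:ℝ) else 0) := by positivity
        simp only [ind3, h1, h2, if_true]; linarith
      · obtain ⟨g1, g2, g3⟩ := card3_ne (hH _ h1)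
        have hno : ∀ u ∈ ({v, w} : Finset V), u ∈ S := by
          intro u hu
          by_contra hu'
          apply h2
          have hu3 : (1/3) * (n - 2) ≤ ∑ b, ind3 H x u b := by simpa [hS] using hu'
          refine Finset.mem_filter.2 ⟨h1, x, by simp, u, Finset.mem_insert_of_mem hu, ?_, ?_⟩
          · simp at hu; rcases hu with rfl | rfl <;> assumption
          · rw [hn]; exact hu3.trans (codeg_ge H hH x u)
        simp [ind3, h1, h2, hno v (by simp), hno w (by simp)]
    · have : (0:ℝ) ≤ (if v ∈ S then 1 else 0) * (if w ∈ S then (1:ℝ) else 0) := by positivity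
      have := ind3_nonneg (largeSub H) x v w
      have h0 : ind3 H x v w = 0 := by simp [ind3, h1]
      linarith
  have hsum : ∑ a, ∑ b, ind3 H x a b ≤ ∑ a, ∑ b, ind3 (largeSub H) x a b + (S.card : ℝ) ^ 2 := by
    calc _ ≤ ∑ v, ∑ w, (ind3 (largeSub H) x v w +
        (if v ∈ S then 1 else 0) * (if w ∈ S then (1:ℝ) else 0)) :=
          Finset.sum_le_sum fun v _ => Finset.sum_le_sum fun w _ => key v w
      _ = _ := by
          simp only [Finset.sum_add_distrib]
          rw [← Finset.sum_mul_sum]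
          simp [sq]
  have hb : ∀ v, ∑ b, ind3 H x v b ≤ n - (if v ∈ S then 1 else 0) * ((2/3) * n) := by
    intro v
    by_cases hv : v ∈ S
    · have : ∑ b, ind3 H x v b < (1/3) * (n - 2) := by simpa [hS] using hv
      simp only [hv, if_true]; linarith
    · simp only [hv, if_false]
      have : ∑ b, ind3 H x v b ≤ ∑ b : V, (1:ℝ) := Finset.sum_le_sum fun b _ => ind3_le_one _ _ _ _
      simp [hn] at this
      linarith
  have hs : ∑ a, ∑ b, ind3 H x a b ≤ n * n - S.card * ((2/3) * n) := by
    calc _ ≤ ∑ v, (n - (if v ∈ S then 1 else 0) * ((2/3) * n)) := Finset.sum_le_sum fun v _ => hb v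
      _ = _ := by
        rw [Finset.sum_sub_distrib, ← Finset.sum_mul]
        simp [hn]
  have hs2 : (S.card : ℝ) ≤ 0.3 * n + 3.6 := by
    have h : (S.card : ℝ) * n ≤ (0.3 * n + 3.6) * n := by nlinarith
    exact le_of_mul_le_mul_right h (by linarith)
  have hs3 : (S.card : ℝ) ^ 2 ≤ (0.3 * n + 3.6) ^ 2 := by gcongr
  nlinarith

lemma goodman (A : V → V → ℝ) (hA : ∀ a b, A a b = 0 ∨ A a b = 1) (hsymm : ∀ a b, A a b = A b a)
    (n d : ℝ) (hn : (Fintype.card V : ℝ) = n) (hn0 : 0 < n) (hd : 1/2 ≤ d)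
    (hE : d * n ^ 2 ≤ ∑ a, ∑ b, A a b) :
    d * (2 * d - 1) * n ^ 3 ≤ ∑ a, ∑ b, ∑ c, A a b * A a c * A b c := by
  set E := ∑ a, ∑ b, A a b with hEd
  have h1 : ∑ a, ∑ b, ∑ c, (A a b * A a c + A a b * A b c - A a b) ≤
      ∑ a, ∑ b, ∑ c, A a b * A a c * A b c := by
    refine Finset.sum_le_sum fun a _ => Finset.sum_le_sum fun b _ => Finset.sum_le_sum fun c _ => ?_
    rcases hA a b with h | h <;> rcases hA a c with h' | h' <;> rcases hA b c with h'' | h'' <;>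
      rw [h, h', h''] <;> norm_num
  have h2 : ∑ a, ∑ b, ∑ c, A a b * A a c = ∑ a, (∑ b, A a b) ^ 2 := by
    refine Finset.sum_congr rfl fun a _ => ?_
    rw [sq, Finset.sum_mul_sum]
  have h3 : ∑ a, ∑ b, ∑ c, A a b * A b c = ∑ a, (∑ b, A a b) ^ 2 := by
    rw [Finset.sum_comm]
    refine Finset.sum_congr rfl fun a _ => ?_
    rw [sq, Finset.sum_mul_sum]
    refine Finset.sum_congr rfl fun b _ => Finset.sum_congr rfl fun c _ => ?_
    rw [hsymm b a]
  have h4 : ∑ a, ∑ b, ∑ c : V, A a b = n * E := by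
    simp only [Finset.sum_const, Finset.card_univ, nsmul_eq_mul, hn, ← Finset.mul_sum, hEd]
  have h5 : E ^ 2 ≤ n * ∑ a, (∑ b, A a b) ^ 2 := by
    have := sq_sum_le_card_mul_sum_sq (s := (univ : Finset V)) (f := fun a => ∑ b, A a b)
    rw [Finset.card_univ, hn] at this
    exact this
  simp only [Finset.sum_sub_distrib, Finset.sum_add_distrib] at h1
  rw [h2, h3, h4] at h1
  refine le_trans ?_ h1
  refine le_of_mul_le_mul_left ?_ hn0
  have h6 : 0 ≤ (E - d * n ^ 2) * (2 * (E + d * n ^ 2) - n ^ 2) := by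
    apply mul_nonneg <;> nlinarith [sq_nonneg n]
  nlinarith

lemma cs_step {I J : Type} [Fintype I] [Fintype J] (g : I → J → ℝ) :
    (∑ i, ∑ j, g i j) ^ 2 ≤ (Fintype.card I : ℝ) * ∑ i, ∑ j, ∑ j', g i j * g i j' := by
  have := sq_sum_le_card_mul_sum_sq (s := (univ : Finset I)) (f := fun i => ∑ j, g i j)
  rw [Finset.card_univ] at this
  refine this.trans_eq ?_
  congr 1
  refine Finset.sum_congr rfl fun i _ => ?_
  rw [sq, Finset.sum_mul_sum]

lemma box (f : V → V → V → ℝ) (n ε : ℝ) (hn : (Fintype.card V : ℝ) = n) (hn0 : 0 < n)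
    (hε : 0 ≤ ε) (hf : ε * n ^ 3 ≤ ∑ a, ∑ b, ∑ c, f a b c) :
    ε ^ 8 * n ^ 6 ≤ ∑ p : (V × V) × (V × V), ∑ c, ∑ c',
      (f p.1.1 p.2.1 c * f p.1.2 p.2.1 c * (f p.1.1 p.2.2 c * f p.1.2 p.2.2 c)) *
      (f p.1.1 p.2.1 c' * f p.1.2 p.2.1 c' * (f p.1.1 p.2.2 c' * f p.1.2 p.2.2 c')) := by
  have s1 := cs_step (I := V × V) (J := V) (fun i a => f a i.1 i.2)
  have s2 := cs_step (I := (V × V) × V) (J := V) (fun i b => f i.1.1 b i.2 * f i.1.2 b i.2)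
  have s3 := cs_step (I := (V × V) × (V × V)) (J := V)
    (fun p c => f p.1.1 p.2.1 c * f p.1.2 p.2.1 c * (f p.1.1 p.2.2 c * f p.1.2 p.2.2 c))
  set Q := ∑ p : (V × V) × (V × V), ∑ c, ∑ c',
      (f p.1.1 p.2.1 c * f p.1.2 p.2.1 c * (f p.1.1 p.2.2 c * f p.1.2 p.2.2 c)) *
      (f p.1.1 p.2.1 c' * f p.1.2 p.2.1 c' * (f p.1.1 p.2.2 c' * f p.1.2 p.2.2 c')) with hQ
  have e0 : ∑ i : V × V, ∑ a, f a i.1 i.2 = ∑ a, ∑ b, ∑ c, f a b c := by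
    rw [Finset.sum_comm]
    refine Finset.sum_congr rfl fun a _ => ?_
    rw [Fintype.sum_prod_type]
  have e1 : ∑ i : V × V, ∑ a, ∑ a', f a i.1 i.2 * f a' i.1 i.2 =
      ∑ i : (V × V) × V, ∑ b, f i.1.1 b i.2 * f i.1.2 b i.2 := by
    calc _ = ∑ i : V × V, ∑ q : V × V, f q.1 i.1 i.2 * f q.2 i.1 i.2 := by
            refine Finset.sum_congr rfl fun i _ => ?_
            rw [Fintype.sum_prod_type]
      _ = ∑ q : V × V, ∑ i : V × V, f q.1 i.1 i.2 * f q.2 i.1 i.2 := Finset.sum_comm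
      _ = ∑ q : V × V, ∑ c, ∑ b, f q.1 b c * f q.2 b c := by
            refine Finset.sum_congr rfl fun q _ => ?_
            rw [Fintype.sum_prod_type, Finset.sum_comm]
      _ = _ := (Fintype.sum_prod_type' (fun (q : V × V) c => ∑ b, f q.1 b c * f q.2 b c)).symm
  have e2 : ∑ i : (V × V) × V, ∑ b, ∑ b', (f i.1.1 b i.2 * f i.1.2 b i.2) *
        (f i.1.1 b' i.2 * f i.1.2 b' i.2) =
      ∑ p : (V × V) × (V × V), ∑ c,
        f p.1.1 p.2.1 c * f p.1.2 p.2.1 c * (f p.1.1 p.2.2 c * f p.1.2 p.2.2 c) := by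
    calc _ = ∑ q : V × V, ∑ c, ∑ b, ∑ b', (f q.1 b c * f q.2 b c) * (f q.1 b' c * f q.2 b' c) :=
            Fintype.sum_prod_type' (fun (q : V × V) c =>
              ∑ b, ∑ b', (f q.1 b c * f q.2 b c) * (f q.1 b' c * f q.2 b' c))
      _ = ∑ q : V × V, ∑ r : V × V, ∑ c, (f q.1 r.1 c * f q.2 r.1 c) * (f q.1 r.2 c * f q.2 r.2 c) := by
            refine Finset.sum_congr rfl fun q _ => ?_
            rw [Finset.sum_comm, Fintype.sum_prod_type]
            refine Finset.sum_congr rfl fun b _ => ?_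
            rw [Finset.sum_comm]
      _ = _ := (Fintype.sum_prod_type' (fun q r : V × V =>
            ∑ c, (f q.1 r.1 c * f q.2 r.1 c) * (f q.1 r.2 c * f q.2 r.2 c))).symm
  rw [e0, e1] at s1
  rw [e2] at s2
  simp only [Fintype.card_prod, Nat.cast_mul, hn] at s1 s2 s3
  set X0 := ∑ a, ∑ b, ∑ c, f a b c
  set X1 := ∑ i : (V × V) × V, ∑ b, f i.1.1 b i.2 * f i.1.2 b i.2
  set X2 := ∑ p : (V × V) × (V × V), ∑ c,
        f p.1.1 p.2.1 c * f p.1.2 p.2.1 c * (f p.1.1 p.2.2 c * f p.1.2 p.2.2 c)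
  have t1 : ε ^ 2 * n ^ 4 ≤ X1 := by
    refine le_of_mul_le_mul_left ?_ (show 0 < n * n by positivity)
    refine le_trans ?_ s1
    calc _ = (ε * n ^ 3) ^ 2 := by ring
      _ ≤ _ := by gcongr
  have t2 : ε ^ 4 * n ^ 5 ≤ X2 := by
    refine le_of_mul_le_mul_left ?_ (show 0 < n * n * n by positivity)
    refine le_trans ?_ s2
    calc _ = (ε ^ 2 * n ^ 4) ^ 2 := by ring
      _ ≤ _ := by gcongr
  refine le_of_mul_le_mul_left ?_ (show 0 < n * n * (n * n) by positivity)
  refine le_trans ?_ s3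
  calc _ = (ε ^ 4 * n ^ 5) ^ 2 := by ring
    _ ≤ _ := by gcongr

lemma ind3_mem {F : Finset (Finset V)} {a b c : V} (h : ind3 F a b c ≠ 0) :
    ({a, b, c} : Finset V) ∈ F := by
  by_contra h'
  exact h (by simp [ind3, h'])

lemma pt_bound (F : Finset (Finset V)) (p : (V × V) × (V × V)) (c c' : V) (P : Prop)
    (hP : (p.1.1 ≠ p.1.2 ∧ p.2.1 ≠ p.2.2 ∧ c ≠ c') →
      ((({p.1.1, p.2.1, c} : Finset V) ∈ F ∧ ({p.1.1, p.2.1, c'} : Finset V) ∈ F) ∧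
        ({p.1.1, p.2.2, c} : Finset V) ∈ F ∧ ({p.1.1, p.2.2, c'} : Finset V) ∈ F) ∧
      ((({p.1.2, p.2.1, c} : Finset V) ∈ F ∧ ({p.1.2, p.2.1, c'} : Finset V) ∈ F) ∧
        ({p.1.2, p.2.2, c} : Finset V) ∈ F ∧ ({p.1.2, p.2.2, c'} : Finset V) ∈ F) → P) [Decidable P] :
    (ind3 F p.1.1 p.2.1 c * ind3 F p.1.2 p.2.1 c * (ind3 F p.1.1 p.2.2 c * ind3 F p.1.2 p.2.2 c)) *
      (ind3 F p.1.1 p.2.1 c' * ind3 F p.1.2 p.2.1 c' * (ind3 F p.1.1 p.2.2 c' * ind3 F p.1.2 p.2.2 c'))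
    ≤ (if P then (1:ℝ) else 0) +
          ((if p.1.1 = p.1.2 then 1 else 0) + (if p.2.1 = p.2.2 then 1 else 0) +
            (if c = c' then 1 else 0)) := by
  have hA : ∀ a b c a' b' c' : V, 0 ≤ ind3 F a b c * ind3 F a' b' c' ∧
      ind3 F a b c * ind3 F a' b' c' ≤ 1 := fun a b c a' b' c' =>
    ⟨mul_nonneg (ind3_nonneg _ _ _ _) (ind3_nonneg _ _ _ _),
      mul_le_one₀ (ind3_le_one _ _ _ _) (ind3_nonneg _ _ _ _) (ind3_le_one _ _ _ _)⟩
  have hle : (ind3 F p.1.1 p.2.1 c * ind3 F p.1.2 p.2.1 c * (ind3 F p.1.1 p.2.2 c * ind3 F p.1.2 p.2.2 c)) *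
      (ind3 F p.1.1 p.2.1 c' * ind3 F p.1.2 p.2.1 c' * (ind3 F p.1.1 p.2.2 c' * ind3 F p.1.2 p.2.2 c')) ≤ 1 := by
    apply mul_le_one₀
    · exact mul_le_one₀ (hA _ _ _ _ _ _).2 (hA _ _ _ _ _ _).1 (hA _ _ _ _ _ _).2
    · exact mul_nonneg (hA _ _ _ _ _ _).1 (hA _ _ _ _ _ _).1
    · exact mul_le_one₀ (hA _ _ _ _ _ _).2 (hA _ _ _ _ _ _).1 (hA _ _ _ _ _ _).2
  by_cases hz : (ind3 F p.1.1 p.2.1 c * ind3 F p.1.2 p.2.1 c * (ind3 F p.1.1 p.2.2 c * ind3 F p.1.2 p.2.2 c)) *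
      (ind3 F p.1.1 p.2.1 c' * ind3 F p.1.2 p.2.1 c' * (ind3 F p.1.1 p.2.2 c' * ind3 F p.1.2 p.2.2 c')) = 0
  · rw [hz]; positivity
  · refine hle.trans ?_
    simp only [mul_eq_zero, not_or] at hz
    obtain ⟨⟨⟨z1, z2⟩, z3, z4⟩, ⟨z5, z6⟩, z7, z8⟩ := hz
    by_cases q1 : p.1.1 = p.1.2
    · rw [if_pos q1]; split_ifs <;> norm_num
    by_cases q2 : p.2.1 = p.2.2
    · rw [if_pos q2]; split_ifs <;> norm_num
    by_cases q3 : c = c'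
    · rw [if_pos q3]; split_ifs <;> norm_num
    have : P := hP ⟨q1, q2, q3⟩ ⟨⟨⟨ind3_mem z1, ind3_mem z5⟩, ind3_mem z3, ind3_mem z7⟩,
      ⟨ind3_mem z2, ind3_mem z6⟩, ind3_mem z4, ind3_mem z8⟩
    rw [if_pos this]; split_ifs <;> norm_num

lemma supersat (F : Finset (Finset V)) (hF : ∀ e ∈ F, e.card = 3) (n ε : ℝ)
    (hn : (Fintype.card V : ℝ) = n) (hn0 : 0 < n)
    (hε : 0 ≤ ε) (hf : ε * n ^ 3 ≤ ∑ a, ∑ b, ∑ c, ind3 F a b c) :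
    ε ^ 8 * n ^ 6 ≤ 64 * ((tripartiteCopies F 2).card : ℝ) + 3 * n ^ 5 := by
  have hb := box (ind3 F) n ε hn hn0 hε hf
  set N : Finset (((V × V) × (V × V)) × V × V) := univ.filter fun t =>
    (t.1.1.1 ≠ t.1.1.2 ∧ t.1.2.1 ≠ t.1.2.2 ∧ t.2.1 ≠ t.2.2) ∧
    ∀ a ∈ ({t.1.1.1, t.1.1.2} : Finset V), ∀ b ∈ ({t.1.2.1, t.1.2.2} : Finset V),
      ∀ c ∈ ({t.2.1, t.2.2} : Finset V), ({a, b, c} : Finset V) ∈ F with hN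
  have hle : ∑ p : (V × V) × (V × V), ∑ c, ∑ c',
      (ind3 F p.1.1 p.2.1 c * ind3 F p.1.2 p.2.1 c * (ind3 F p.1.1 p.2.2 c * ind3 F p.1.2 p.2.2 c)) *
      (ind3 F p.1.1 p.2.1 c' * ind3 F p.1.2 p.2.1 c' * (ind3 F p.1.1 p.2.2 c' * ind3 F p.1.2 p.2.2 c'))
      ≤ (N.card : ℝ) + 3 * n ^ 5 := by
    calc _ ≤ ∑ p : (V × V) × (V × V), ∑ c, ∑ c', ((if (p, c, c') ∈ N then (1:ℝ) else 0) +
          ((if p.1.1 = p.1.2 then 1 else 0) + (if p.2.1 = p.2.2 then 1 else 0) +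
            (if c = c' then 1 else 0))) := by
          refine Finset.sum_le_sum fun p _ => Finset.sum_le_sum fun c _ =>
            Finset.sum_le_sum fun c' _ => ?_
          exact pt_bound F p c c' _ (fun h1 h2 => by
            rw [hN, Finset.mem_filter]
            refine ⟨Finset.mem_univ _, h1, ?_⟩
            simpa only [Finset.mem_insert, Finset.mem_singleton, forall_eq_or_imp, forall_eq] using h2)
      _ = _ := by
          have e1 : ∑ p : (V × V) × (V × V), ∑ c, ∑ c', (if (p, c, c') ∈ N then (1:ℝ) else 0)
              = (N.card : ℝ) := by
            have h0 : (N.card : ℝ) =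
                ∑ t : ((V × V) × (V × V)) × V × V, (if t ∈ N then (1:ℝ) else 0) := by simp
            rw [h0]
            symm
            refine (Fintype.sum_prod_type _).trans ?_
            refine Finset.sum_congr rfl fun p _ => ?_
            exact Fintype.sum_prod_type _
          have g1 : ∑ q : V × V, (if q.1 = q.2 then (1:ℝ) else 0) = n := by
            rw [Fintype.sum_prod_type]
            simp [hn]
          have e2 : ∑ p : (V × V) × (V × V), ∑ c : V, ∑ c' : V,
              (if p.1.1 = p.1.2 then (1:ℝ) else 0) = n ^ 5 := by
            refine (Fintype.sum_prod_type' (fun q r : V × V => ∑ c : V, ∑ c' : V,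
              (if q.1 = q.2 then (1:ℝ) else 0))).trans ?_
            rw [Finset.sum_comm]
            simp only [Finset.sum_const, Finset.card_univ, nsmul_eq_mul, ← Finset.mul_sum, hn,
              Fintype.card_prod, Nat.cast_mul, g1]
            ring
          have e3 : ∑ p : (V × V) × (V × V), ∑ c : V, ∑ c' : V,
              (if p.2.1 = p.2.2 then (1:ℝ) else 0) = n ^ 5 := by
            rw [Fintype.sum_prod_type]
            simp only [Finset.sum_const, Finset.card_univ, nsmul_eq_mul, ← Finset.mul_sum, hn,
              Fintype.card_prod, Nat.cast_mul, g1]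
            ring
          have e4 : ∑ p : (V × V) × (V × V), ∑ c : V, ∑ c' : V,
              (if c = c' then (1:ℝ) else 0) = n ^ 5 := by
            simp only [Finset.sum_const, Finset.card_univ, nsmul_eq_mul, hn,
              Fintype.card_prod, Nat.cast_mul, Finset.sum_ite_eq, Finset.mem_univ, if_true]
            ring
          simp only [Finset.sum_add_distrib]
          rw [e1, e2, e3, e4]
          ring
  have hcard : N.card ≤ 64 * (tripartiteCopies F 2).card := by
    refine Finset.card_le_mul_card_image_of_maps_to
      (f := fun t => (({t.1.1.1, t.1.1.2} : Finset V), ({t.1.2.1, t.1.2.2} : Finset V),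
        ({t.2.1, t.2.2} : Finset V))) ?_ 64 ?_
    · intro t ht
      simp only [hN, Finset.mem_filter, Finset.mem_univ, true_and] at ht
      obtain ⟨⟨h1, h2, h3⟩, h⟩ := ht
      simp only [tripartiteCopies, Finset.mem_filter, Finset.mem_univ, true_and]
      refine ⟨Finset.card_pair h1, Finset.card_pair h2, Finset.card_pair h3, ?_, ?_, ?_, h⟩
      · rw [Finset.disjoint_left]
        intro a ha hb
        exact (card3_ne (hF _ (h a ha a hb t.2.1 (by simp)))).1 rfl
      · rw [Finset.disjoint_left]
        intro a ha hb
        exact (card3_ne (hF _ (h a ha t.1.2.1 (by simp) a hb))).2.1 rfl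
      · rw [Finset.disjoint_left]
        intro a ha hb
        exact (card3_ne (hF _ (h t.1.1.1 (by simp) a ha a hb))).2.2 rfl
    · rintro ⟨A, B, C⟩ hABC
      simp only [tripartiteCopies, Finset.mem_filter, Finset.mem_univ, true_and] at hABC
      obtain ⟨hA, hB, hC, -⟩ := hABC
      refine le_trans (Finset.card_le_card (t := ((A ×ˢ A) ×ˢ (B ×ˢ B)) ×ˢ C ×ˢ C) ?_) ?_
      · intro t ht
        simp only [Finset.mem_filter, Prod.mk.injEq] at ht
        obtain ⟨-, rfl, rfl, rfl⟩ := ht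
        simp
      · simp [Finset.card_product, hA, hB, hC]
  have : (N.card : ℝ) ≤ 64 * ((tripartiteCopies F 2).card : ℝ) := by exact_mod_cast hcard
  linarith

lemma tri_ind (H : Finset (Finset V)) (hH : ∀ e ∈ H, e.card = 3) (x a b c : V) :
    ind3 (largeSub H) x a b * ind3 (largeSub H) x a c * ind3 (largeSub H) x b c ≤
      ind3 (triLink H x) a b c := by
  by_cases h : ({x, a, b} : Finset V) ∈ largeSub H ∧ ({x, a, c} : Finset V) ∈ largeSub H ∧
      ({x, b, c} : Finset V) ∈ largeSub H
  · obtain ⟨h1, h2, h3⟩ := h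
    have g1 := card3_ne (largeSub_card hH _ h1)
    have g2 := card3_ne (largeSub_card hH _ h2)
    have g3 := card3_ne (largeSub_card hH _ h3)
    have : ({a, b, c} : Finset V) ∈ triLink H x := by
      refine Finset.mem_filter.2 ⟨?_, ?_⟩
      · rw [Finset.mem_powersetCard]
        exact ⟨Finset.subset_univ _, Finset.card_eq_three.2 ⟨a, b, c, g1.2.2, g2.2.2, g3.2.2, rfl⟩⟩
      · intro p hp
        rw [Finset.mem_powersetCard] at hp
        obtain ⟨u, v, huv, rfl⟩ := Finset.card_eq_two.1 hp.2
        have hu := hp.1 (show u ∈ ({u, v} : Finset V) by simp)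
        have hv := hp.1 (show v ∈ ({u, v} : Finset V) by simp)
        simp only [Finset.mem_insert, Finset.mem_singleton] at hu hv
        rcases hu with rfl | rfl | rfl <;> rcases hv with rfl | rfl | rfl <;>
          first | exact absurd rfl huv | assumption | (rw [Finset.pair_comm]; assumption)
    simp [ind3, h1, h2, h3, this]
  · have h0 : ind3 (largeSub H) x a b * ind3 (largeSub H) x a c * ind3 (largeSub H) x b c = 0 := by
      unfold ind3
      split_ifs <;> first | (norm_num; done) | (exfalso; tauto)
    rw [h0]; exact ind3_nonneg _ _ _ _

end helpers

/-- There is `c > 0` such that for all large `n`, in every 3-graph `H` on `n` vertices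
with minimum vertex degree at least `0.8·C(n-1,2)` and every vertex `x`:
(a) `|T^x| ≥ 0.296262·C(n-1,3)`; (b) `|T^x ∩ H'| ≥ 0.005·C(n-1,3)`;
(c) `T^x ∩ H'` contains at least `c·n⁶` copies of `K_{2,2,2}`. -/
theorem stmt_11 :
    ∃ c : ℝ, 0 < c ∧ ∃ n₀ : ℕ, ∀ n : ℕ, n₀ ≤ n →
    ∀ (V : Type) [DecidableEq V] [Fintype V], Fintype.card V = n →
    ∀ H : Finset (Finset V), (∀ e ∈ H, e.card = 3) →
    (∀ v : V, (0.8 : ℝ) * ((n - 1).choose 2 : ℝ) ≤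
      ((H.filter fun e => v ∈ e).card : ℝ)) →
    ∀ x : V,
      (0.296262 : ℝ) * ((n - 1).choose 3 : ℝ) ≤ ((triLink H x).card : ℝ) ∧
      (0.005 : ℝ) * ((n - 1).choose 3 : ℝ) ≤ ((triLink H x ∩ largeSub H).card : ℝ) ∧
      c * (n : ℝ) ^ 6 ≤ ((tripartiteCopies (triLink H x ∩ largeSub H) 2).card : ℝ) := by
  refine ⟨(1/200)^8/128, by norm_num, 10^20, ?_⟩
  intro n hn V _ _ hV H hH hdeg x
  have hn1 : (10:ℝ)^20 ≤ (n:ℝ) := by exact_mod_cast hn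
  have hn0 : (0:ℝ) < n := lt_of_lt_of_le (by norm_num) hn1
  have hcV : (Fintype.card V : ℝ) = (n:ℝ) := by rw [hV]
  have hnN : 3 ≤ n := le_trans (by norm_num) hn
  obtain ⟨m, rfl⟩ : ∃ m, n = m + 3 := ⟨n - 3, by omega⟩
  have hc2 : (((m + 3 - 1).choose 2 : ℕ) : ℝ) = (((m + 3 : ℕ):ℝ) - 1) * (((m + 3 : ℕ):ℝ) - 2) / 2 := by
    rw [show m + 3 - 1 = m + 2 by omega, Nat.cast_choose_two]
    push_cast; ring
  have hc3 : 6 * (((m + 3 - 1).choose 3 : ℕ) : ℝ) ≤ ((m + 3 : ℕ):ℝ) ^ 3 := by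
    have h := Nat.choose_le_pow_div (α := ℝ) 3 (m + 3 - 1)
    have h2 : ((m + 3 - 1 : ℕ) : ℝ) ≤ ((m + 3 : ℕ):ℝ) := by exact_mod_cast (by omega)
    have h3 : ((m + 3 - 1 : ℕ) : ℝ) ^ 3 ≤ ((m + 3 : ℕ):ℝ) ^ 3 := by gcongr
    have h4 : ((Nat.factorial 3 : ℕ) : ℝ) = 6 := by norm_num [Nat.factorial]
    rw [h4] at h
    linarith
  generalize hN : ((m + 3 : ℕ):ℝ) = N at *
  have hlink : ∀ v, 0.7099 * N ^ 2 ≤ ∑ a, ∑ b, ind3 (largeSub H) v a b := by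
    intro v
    refine link_dense H hH v N hcV hn1 ?_
    have h1 := ordered_deg H hH v
    have h2 := hdeg v
    rw [hc2] at h2
    linarith
  have hT0 := goodman (fun a b => ind3 (largeSub H) x a b)
    (fun a b => by unfold ind3; split_ifs <;> simp) (fun a b => ind3_swap _ _ _ _) N 0.7099 hcV hn0
    (by norm_num) (hlink x)
  have hT1 : 0.298 * N ^ 3 ≤ ∑ a, ∑ b, ∑ c, ind3 (triLink H x) a b c := by
    have h1 : ∑ a, ∑ b, ∑ c, ind3 (largeSub H) x a b * ind3 (largeSub H) x a c *
        ind3 (largeSub H) x b c ≤ ∑ a, ∑ b, ∑ c, ind3 (triLink H x) a b c :=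
      Finset.sum_le_sum fun a _ => Finset.sum_le_sum fun b _ => Finset.sum_le_sum fun c _ =>
        tri_ind H hH x a b c
    have h2 : (0:ℝ) < N ^ 3 := by positivity
    have h3 := hT0.trans h1
    norm_num at h3 ⊢
    linarith
  have hL : 0.7099 * N ^ 3 ≤ ∑ a, ∑ b, ∑ c, ind3 (largeSub H) a b c := by
    calc _ = ∑ a : V, 0.7099 * N ^ 2 := by
          rw [Finset.sum_const, Finset.card_univ, nsmul_eq_mul, hcV]; ring
      _ ≤ _ := Finset.sum_le_sum fun v _ => hlink v
  have hTL : (1/200) ^ 1 * N ^ 3 ≤ ∑ a, ∑ b, ∑ c, ind3 (triLink H x ∩ largeSub H) a b c := by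
    have h1 : ∑ a, ∑ b, ∑ c, (ind3 (triLink H x) a b c + ind3 (largeSub H) a b c - 1) ≤
        ∑ a, ∑ b, ∑ c, ind3 (triLink H x ∩ largeSub H) a b c := by
      refine Finset.sum_le_sum fun a _ => Finset.sum_le_sum fun b _ => Finset.sum_le_sum fun c _ => ?_
      unfold ind3
      simp only [Finset.mem_inter]
      split_ifs <;> first | (norm_num; done) | (exfalso; tauto)
    simp only [Finset.sum_sub_distrib, Finset.sum_add_distrib, Finset.sum_const, Finset.card_univ,
      nsmul_eq_mul, hcV, mul_one] at h1
    have h2 : (0:ℝ) < N ^ 3 := by positivity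
    have h3 : N * (N * N) = N ^ 3 := by ring
    rw [h3] at h1
    clear hn hnN hn1
    linarith
  rw [pow_one] at hTL
  have htc : ∀ e ∈ triLink H x, e.card = 3 := fun e he =>
    (Finset.mem_powersetCard.1 (Finset.mem_filter.1 he).1).2
  have htc2 : ∀ e ∈ triLink H x ∩ largeSub H, e.card = 3 := fun e he =>
    htc e (Finset.mem_inter.1 he).1
  have h2 : (0:ℝ) < N ^ 3 := by positivity
  refine ⟨?_, ?_, ?_⟩
  · have := ordered_le _ htc
    linarith
  · have := ordered_le _ htc2
    linarith
  · have h := supersat _ htc2 N (1/200) hcV hn0 (by norm_num) hTL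
    have h5 : 0 < N ^ 5 := by positivity
    have h6 : 10 ^ 20 * N ^ 5 ≤ N ^ 6 := by
      
      calc _ ≤ N * N ^ 5 := mul_le_mul_of_nonneg_right hn1 h5.le
        _ = _ := by ring
    norm_num at h ⊢
    linarith
end

section
/- Let H be a 3-graph on n vertices. Every copy K of K_{2,2,2} in H' contains a tight path of order 4 or 5 which is an x-absorber for every x ∈ S_K. -/
open Finset
open scoped Classical

/-- Every copy `K` of `K_{2,2,2}` in `H'` (given by its classes `A`, `B`, `C`) contains a
tight path of order 4 or 5, with `(1/3)`-large endpairs, which is an `x`-absorber for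
every `x ∈ S_K`, i.e. for every `x` for which `K` is `x`-friendly. -/
theorem stmt_12 (V : Type) [DecidableEq V] [Fintype V]
    (H : Finset (Finset V)) (hH : ∀ e ∈ H, e.card = 3)
    (A B C : Finset V) (hA : A.card = 2) (hB : B.card = 2) (hC : C.card = 2)
    (hAB : Disjoint A B) (hAC : Disjoint A C) (hBC : Disjoint B C)
    (hK : ∀ a ∈ A, ∀ b ∈ B, ∀ c ∈ C, ({a, b, c} : Finset V) ∈ largeSub H) :
    ∃ (i : ℕ) (hi : i = 4 ∨ i = 5) (w : Fin i → V),
      (∀ k, w k ∈ A ∪ B ∪ C) ∧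
      IsTightPath H w ∧
      (1 / 3 : ℝ) * ((Fintype.card V : ℝ) - 2) ≤
        (coDeg H (w ⟨0, by omega⟩) (w ⟨1, by omega⟩) : ℝ) ∧
      (1 / 3 : ℝ) * ((Fintype.card V : ℝ) - 2) ≤
        (coDeg H (w ⟨i - 1, by omega⟩) (w ⟨i - 2, by omega⟩) : ℝ) ∧
      ∀ x : V,
        (∀ a ∈ A, ∀ b ∈ B, ∀ c ∈ C,
          insert x ({a, b} : Finset V) ∈ largeSub H ∧
          insert x ({b, c} : Finset V) ∈ largeSub H ∧
          insert x ({a, c} : Finset V) ∈ largeSub H) →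
        ∀ (j : ℕ) (hj : j + 1 < i),
          ({x, w ⟨j, by omega⟩, w ⟨j + 1, by omega⟩} : Finset V) ∈ H := by
  suffices key : ∀ G : Prop, (G ↔ (∃ (i : ℕ) (hi : i = 4 ∨ i = 5) (w : Fin i → V),
      (∀ k, w k ∈ A ∪ B ∪ C) ∧
      IsTightPath H w ∧
      (1 / 3 : ℝ) * ((Fintype.card V : ℝ) - 2) ≤
        (coDeg H (w ⟨0, by omega⟩) (w ⟨1, by omega⟩) : ℝ) ∧
      (1 / 3 : ℝ) * ((Fintype.card V : ℝ) - 2) ≤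
        (coDeg H (w ⟨i - 1, by omega⟩) (w ⟨i - 2, by omega⟩) : ℝ) ∧
      ∀ x : V,
        (∀ a ∈ A, ∀ b ∈ B, ∀ c ∈ C,
          insert x ({a, b} : Finset V) ∈ largeSub H ∧
          insert x ({b, c} : Finset V) ∈ largeSub H ∧
          insert x ({a, c} : Finset V) ∈ largeSub H) →
        ∀ (j : ℕ) (hj : j + 1 < i),
          ({x, w ⟨j, by omega⟩, w ⟨j + 1, by omega⟩} : Finset V) ∈ H)) → G by
    exact (key _ Iff.rfl)
  intro G hG
  classical
  set L : V → V → Prop := fun u v =>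
    (1 / 3 : ℝ) * ((Fintype.card V : ℝ) - 2) ≤ (coDeg H u v : ℝ) with hL
  have Lsymm : ∀ u v, L u v → L v u := by
    intro u v h
    have e : coDeg H v u = coDeg H u v := by
      unfold coDeg
      simp only [and_comm]
    simp only [hL] at h ⊢
    rw [e]; exact h
  have sub : ∀ e, e ∈ largeSub H → e ∈ H := fun e he => (Finset.mem_filter.1 he).1
  set F : V → Prop := fun x => ∀ a ∈ A, ∀ b ∈ B, ∀ c ∈ C,
          insert x ({a, b} : Finset V) ∈ largeSub H ∧
          insert x ({b, c} : Finset V) ∈ largeSub H ∧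
          insert x ({a, c} : Finset V) ∈ largeSub H with hF
  have p1 : ∀ p q r : V, ({p, q, r} : Finset V) ∈ H → ({q, p, r} : Finset V) ∈ H := by
    intro p q r h; rw [Finset.insert_comm]; exact h
  have p2 : ∀ p q r : V, ({p, q, r} : Finset V) ∈ H → ({p, r, q} : Finset V) ∈ H := by
    intro p q r h; rw [Finset.pair_comm r q]; exact h
  have big : ∀ a ∈ A, ∀ b ∈ B, ∀ c ∈ C, L a b ∨ L b c ∨ L a c := by
    intro a ha b hb c hc
    obtain ⟨-, u, hu, v, hv, huv, h⟩ := Finset.mem_filter.1 (hK a ha b hb c hc)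
    have h1 : L u v := h
    have h2 := Lsymm _ _ h1
    clear_value L
    simp only [Finset.mem_insert, Finset.mem_singleton] at hu hv
    rcases hu with rfl | rfl | rfl <;> rcases hv with rfl | rfl | rfl <;> tauto
  have h4 : ∀ p q r s : V, [p, q, r, s].Nodup → (∀ y ∈ [p, q, r, s], y ∈ A ∪ B ∪ C) →
      ({p, q, r} : Finset V) ∈ H → ({q, r, s} : Finset V) ∈ H → L p q → L s r →
      (∀ x, F x → ({x, p, q} : Finset V) ∈ H ∧ ({x, q, r} : Finset V) ∈ H ∧
        ({x, r, s} : Finset V) ∈ H) → G := by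
    intro p q r s hn hm e1 e2 l1 l2 hx
    refine hG.2 ⟨4, Or.inl rfl, [p, q, r, s].get, fun k => hm _ (List.get_mem _ _),
      ⟨List.nodup_iff_injective_get.1 hn, ?_⟩, l1, l2, ?_⟩
    · intro i hi
      have : i = 0 ∨ i = 1 := by omega
      rcases this with rfl | rfl
      · exact e1
      · exact e2
    · intro x hxF j hj
      obtain ⟨f1, f2, f3⟩ := hx x hxF
      have : j = 0 ∨ j = 1 ∨ j = 2 := by omega
      rcases this with rfl | rfl | rfl
      · exact f1
      · exact f2
      · exact f3
  have h5 : ∀ p q r s t : V, [p, q, r, s, t].Nodup → (∀ y ∈ [p, q, r, s, t], y ∈ A ∪ B ∪ C) →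
      ({p, q, r} : Finset V) ∈ H → ({q, r, s} : Finset V) ∈ H → ({r, s, t} : Finset V) ∈ H →
      L p q → L t s →
      (∀ x, F x → ({x, p, q} : Finset V) ∈ H ∧ ({x, q, r} : Finset V) ∈ H ∧
        ({x, r, s} : Finset V) ∈ H ∧ ({x, s, t} : Finset V) ∈ H) → G := by
    intro p q r s t hn hm e1 e2 e3 l1 l2 hx
    refine hG.2 ⟨5, Or.inr rfl, [p, q, r, s, t].get, fun k => hm _ (List.get_mem _ _),
      ⟨List.nodup_iff_injective_get.1 hn, ?_⟩, l1, l2, ?_⟩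
    · intro i hi
      have : i = 0 ∨ i = 1 ∨ i = 2 := by omega
      rcases this with rfl | rfl | rfl
      · exact e1
      · exact e2
      · exact e3
    · intro x hxF j hj
      obtain ⟨f1, f2, f3, f4⟩ := hx x hxF
      have : j = 0 ∨ j = 1 ∨ j = 2 ∨ j = 3 := by omega
      rcases this with rfl | rfl | rfl | rfl
      · exact f1
      · exact f2
      · exact f3
      · exact f4
  have E : ∀ a ∈ A, ∀ b ∈ B, ∀ c ∈ C, ({a, b, c} : Finset V) ∈ H ∧ ({a, c, b} : Finset V) ∈ H ∧
      ({b, a, c} : Finset V) ∈ H ∧ ({b, c, a} : Finset V) ∈ H ∧ ({c, a, b} : Finset V) ∈ H ∧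
      ({c, b, a} : Finset V) ∈ H := by
    intro a ha b hb c hc
    have h := sub _ (hK a ha b hb c hc)
    exact ⟨h, p2 _ _ _ h, p1 _ _ _ h, p2 _ _ _ (p1 _ _ _ h), p1 _ _ _ (p2 _ _ _ h),
      p2 _ _ _ (p1 _ _ _ (p2 _ _ _ h))⟩
  have X : ∀ x, F x → ∀ a ∈ A, ∀ b ∈ B, ∀ c ∈ C, ({x, a, b} : Finset V) ∈ H ∧
      ({x, b, a} : Finset V) ∈ H ∧ ({x, b, c} : Finset V) ∈ H ∧ ({x, c, b} : Finset V) ∈ H ∧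
      ({x, a, c} : Finset V) ∈ H ∧ ({x, c, a} : Finset V) ∈ H := by
    intro x hx a ha b hb c hc
    obtain ⟨f1, f2, f3⟩ := hx a ha b hb c hc
    have f1 := sub _ f1
    have f2 := sub _ f2
    have f3 := sub _ f3
    exact ⟨f1, p2 _ _ _ f1, f2, p2 _ _ _ f2, f3, p2 _ _ _ f3⟩
  clear hG
  clear_value L F
  clear hK hF hL sub p1 p2
  obtain ⟨a, a', haa, rfl⟩ := Finset.card_eq_two.1 hA
  obtain ⟨b, b', hbb, rfl⟩ := Finset.card_eq_two.1 hB
  obtain ⟨c, c', hcc, rfl⟩ := Finset.card_eq_two.1 hC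
  have g1 := big a (by simp) b (by simp) c (by simp)
  have g2 := big a' (by simp) b' (by simp) c' (by simp)
  simp only [Finset.mem_insert, Finset.mem_singleton, forall_eq_or_imp, forall_eq] at E X
  simp only [Finset.disjoint_insert_left, Finset.disjoint_singleton_left, Finset.mem_insert,
    Finset.mem_singleton, not_or] at hAB hAC hBC
  obtain ⟨⟨n1, n2⟩, n3, n4⟩ := hAB
  obtain ⟨⟨n5, n6⟩, n7, n8⟩ := hAC
  obtain ⟨⟨n9, n10⟩, n11, n12⟩ := hBC
  have m1 := haa.symm
  have m2 := hbb.symm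
  have m3 := hcc.symm
  have k1 := Ne.symm n1
  have k2 := Ne.symm n2
  have k3 := Ne.symm n3
  have k4 := Ne.symm n4
  have k5 := Ne.symm n5
  have k6 := Ne.symm n6
  have k7 := Ne.symm n7
  have k8 := Ne.symm n8
  have k9 := Ne.symm n9
  have k10 := Ne.symm n10
  have k11 := Ne.symm n11
  have k12 := Ne.symm n12
  rcases g1 with g1 | g1 | g1 <;> rcases g2 with g2 | g2 | g2
  · refine h5 a b c a' b' ?_ ?_ ?_ ?_ ?_ g1 (Lsymm _ _ g2) ?_
    · clear E X big h4 h5 Lsymm; simp [*]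
    · simp
    · simp only [E]
    · simp only [E]
    · simp only [E]
    · intro x hx; simp only [X x hx, and_self]
  · refine h4 b a c' b' ?_ ?_ ?_ ?_ (Lsymm _ _ g1) g2 ?_
    · clear E X big h4 h5 Lsymm; simp [*]
    · simp
    · simp only [E]
    · simp only [E]
    · intro x hx; simp only [X x hx, and_self]
  · refine h4 a b c' a' ?_ ?_ ?_ ?_ g1 g2 ?_
    · clear E X big h4 h5 Lsymm; simp [*]
    · simp
    · simp only [E]
    · simp only [E]
    · intro x hx; simp only [X x hx, and_self]
  · refine h4 b c a' b' ?_ ?_ ?_ ?_ g1 (Lsymm _ _ g2) ?_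
    · clear E X big h4 h5 Lsymm; simp [*]
    · simp
    · simp only [E]
    · simp only [E]
    · intro x hx; simp only [X x hx, and_self]
  · refine h5 b c a b' c' ?_ ?_ ?_ ?_ ?_ g1 (Lsymm _ _ g2) ?_
    · clear E X big h4 h5 Lsymm; simp [*]
    · simp
    · simp only [E]
    · simp only [E]
    · simp only [E]
    · intro x hx; simp only [X x hx, and_self]
  · refine h4 c b a' c' ?_ ?_ ?_ ?_ (Lsymm _ _ g1) (Lsymm _ _ g2) ?_
    · clear E X big h4 h5 Lsymm; simp [*]
    · simp
    · simp only [E]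
    · simp only [E]
    · intro x hx; simp only [X x hx, and_self]
  · refine h4 a c b' a' ?_ ?_ ?_ ?_ g1 g2 ?_
    · clear E X big h4 h5 Lsymm; simp [*]
    · simp
    · simp only [E]
    · simp only [E]
    · intro x hx; simp only [X x hx, and_self]
  · refine h4 c a b' c' ?_ ?_ ?_ ?_ (Lsymm _ _ g1) (Lsymm _ _ g2) ?_
    · clear E X big h4 h5 Lsymm; simp [*]
    · simp
    · simp only [E]
    · simp only [E]
    · intro x hx; simp only [X x hx, and_self]
  · refine h5 a c b a' c' ?_ ?_ ?_ ?_ ?_ g1 (Lsymm _ _ g2) ?_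
    · clear E X big h4 h5 Lsymm; simp [*]
    · simp
    · simp only [E]
    · simp only [E]
    · simp only [E]
    · intro x hx; simp only [X x hx, and_self]
end

section
/- For every ρ > 0, λ > 0 and every integer L ≥ 1, there exists n_0 such that every 3-graph H on n ≥ n_0 vertices with δ(H) ≥ (5/9 + λ)·C(n−1,2) contains a family of pairwise vertex-disjoint copies of K_{L,L,L} which together cover at least (1 − ρ)·n vertices of H. -/
open Finset
open scoped Classical

lemma hc_layer (k D : ℕ) : ∑ t ∈ range D, (if t + 1 ≤ k then 1 else 0) ≤ k := by
  rw [← Finset.sum_filter, Finset.sum_const, smul_eq_mul, mul_one]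
  calc _ ≤ (range k).card := by
        apply Finset.card_le_card
        intro t ht
        simp at ht ⊢
        omega
    _ = k := by simp

lemma hc_quad (a p c : ℕ) (hpa : p ≤ a) (hac : a ≤ c) (h : 3 * (a + p) ≤ 2 * c) :
    9 * (a * a + 2 * (p * (c - a))) ≤ 5 * c ^ 2 := by
  obtain ⟨b, rfl⟩ := Nat.exists_eq_add_of_le hac
  simp only [Nat.add_sub_cancel_left]
  zify at *
  by_cases h1 : 3 * (a : ℤ) ≤ a + b
  · nlinarith [mul_nonneg (sub_nonneg.2 h1) (sub_nonneg.2 hpa)]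
  · push Not at h1
    nlinarith [mul_nonneg (sub_nonneg.2 h1.le) (sub_nonneg.2 h), mul_nonneg (sub_nonneg.2 h) (show (0:ℤ) ≤ b by positivity)]

lemma hc_pairs {ι : Type} [Fintype ι] (k : ι → ℕ) (D : ℕ) (hD : 1 ≤ D)
    (hk : 3 * ∑ v, k v ≤ D * Fintype.card ι) :
    9 * ((univ : Finset (ι × ι)).filter fun p => D ≤ k p.1 + k p.2).card
      ≤ 5 * (Fintype.card ι) ^ 2 := by
  set c := Fintype.card ι with hc
  let g : ℕ → ℕ := fun t => ((univ : Finset ι).filter fun v => t ≤ k v).card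
  have hg : ∑ t ∈ range D, g (t + 1) ≤ ∑ v, k v := by
    have : ∀ t, g t = ∑ v : ι, if t ≤ k v then 1 else 0 := by
      intro t; simp [g]
    simp only [this]
    rw [Finset.sum_comm]
    exact Finset.sum_le_sum fun v _ => hc_layer _ _
  have hg' : ∑ t ∈ range D, g (D - t) ≤ ∑ v, k v := by
    rw [← Finset.sum_range_reflect] at hg
    refine le_trans (le_of_eq ?_) hg
    apply Finset.sum_congr rfl
    intro t ht
    simp at ht
    congr 1
    omega
  obtain ⟨t, ht, hle⟩ : ∃ t ∈ range D, 3 * (g (t+1) + g (D - t)) ≤ 2 * c := by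
    by_contra hcon
    push Not at hcon
    have := Finset.sum_lt_sum_of_nonempty (s := range D) (by simpa using by omega) hcon
    simp only [← Finset.mul_sum, Finset.sum_add_distrib, Finset.sum_const, card_range, smul_eq_mul] at this
    nlinarith
  simp at ht
  have key : ∀ t, 1 ≤ t → t ≤ D + 1 - t → 3 * (g t + g (D + 1 - t)) ≤ 2 * c →
      9 * ((univ : Finset (ι × ι)).filter fun p => D ≤ k p.1 + k p.2).card ≤ 5 * c ^ 2 := by
    intro t ht1 ht2 ht3
    set A := (univ : Finset ι).filter fun v => t ≤ k v with hA
    set P := (univ : Finset ι).filter fun v => D + 1 - t ≤ k v with hP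
    have hPA : P ⊆ A := by
      intro v hv
      simp [hA, hP] at hv ⊢; omega
    have h1 : ((univ : Finset (ι × ι)).filter fun p => D ≤ k p.1 + k p.2) ⊆
        A ×ˢ A ∪ (P ×ˢ Aᶜ ∪ Aᶜ ×ˢ P) := by
      rintro ⟨u, v⟩ huv
      simp [hA, hP] at huv ⊢
      omega
    have h2 := Finset.card_le_card h1
    have h3 := h2.trans (Finset.card_union_le _ _)
    have h4 := Finset.card_union_le (P ×ˢ Aᶜ) (Aᶜ ×ˢ P)
    simp only [card_product, Finset.card_compl] at h3 h4
    have h5 := hc_quad A.card P.card c (Finset.card_le_card hPA) (Finset.card_le_univ A) ht3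
    rw [← hc] at h4
    have : A.card * A.card + (P.card * (c - A.card) + (c - A.card) * P.card) = A.card * A.card + 2 * (P.card * (c - A.card)) := by ring
    omega
  by_cases hh : t + 1 ≤ D - t
  · refine key (t+1) (by omega) (by omega) ?_
    rwa [show D + 1 - (t+1) = D - t by omega]
  · refine key (D - t) (by omega) (by omega) ?_
    rw [show D + 1 - (D - t) = t + 1 by omega]
    omega

def hcInd {ι : Type} [DecidableEq ι] (e : ι × ι × ι) (v : ι) : ℤ :=
  (if e.1 = v then 1 else 0) + (if e.2.1 = v then 1 else 0) + (if e.2.2 = v then 1 else 0)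

def hcLoad {ι : Type} [DecidableEq ι] (l : List (ι × ι × ι)) (v : ι) : ℤ :=
  (l.map fun e => hcInd e v).sum

lemma hcInd_nonneg {ι : Type} [DecidableEq ι] (e : ι × ι × ι) (v : ι) : 0 ≤ hcInd e v := by
  unfold hcInd; positivity

lemma hcLoad_cons {ι : Type} [DecidableEq ι] (e : ι × ι × ι) (l : List (ι × ι × ι)) (v : ι) :
    hcLoad (e :: l) v = hcInd e v + hcLoad l v := by simp [hcLoad]

lemma hcLoad_nonneg {ι : Type} [DecidableEq ι] (l : List (ι × ι × ι)) (v : ι) :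
    0 ≤ hcLoad l v := by
  induction l with
  | nil => simp [hcLoad]
  | cons e l ih => rw [hcLoad_cons]; have := hcInd_nonneg e v; omega

lemma hcLoad_erase {ι : Type} [DecidableEq ι] (e : ι × ι × ι) (l : List (ι × ι × ι)) (he : e ∈ l)
    (v : ι) : hcLoad l v = hcInd e v + hcLoad (l.erase e) v := by
  have := (List.perm_cons_erase he).map (fun e => hcInd e v)
  unfold hcLoad
  rw [this.sum_eq]; simp

lemma hcInd_sum {ι : Type} [DecidableEq ι] [Fintype ι] (e : ι × ι × ι) (w : ι → ℤ) :
    ∑ v, w v * hcInd e v = w e.1 + w e.2.1 + w e.2.2 := by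
  simp [hcInd, mul_add, Finset.sum_add_distrib]

lemma hcInd_sq {ι : Type} [DecidableEq ι] [Fintype ι] (e : ι × ι × ι)
    (h1 : e.1 ≠ e.2.1) (h2 : e.1 ≠ e.2.2) (h3 : e.2.1 ≠ e.2.2) :
    ∑ v, hcInd e v ^ 2 = 3 := by
  have : ∀ v, hcInd e v ^ 2 = 1 * hcInd e v := by
    intro v
    unfold hcInd
    split_ifs <;> simp_all
  simp only [this]
  rw [hcInd_sum e (fun _ => 1)]; norm_num

lemma hcLoad_sum {ι : Type} [DecidableEq ι] [Fintype ι] (l : List (ι × ι × ι)) (w : ι → ℤ) :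
    ∑ v, w v * hcLoad l v = (l.map fun e => w e.1 + w e.2.1 + w e.2.2).sum := by
  induction l with
  | nil => simp [hcLoad]
  | cons e l ih =>
    simp only [hcLoad_cons, mul_add, Finset.sum_add_distrib, ih, hcInd_sum]
    simp

lemma hc_matching {ι : Type} [DecidableEq ι] [Fintype ι] [Nonempty ι] (G : ι → ι → ι → Prop)
    (hG : ∀ u v w, G u v w → u ≠ v ∧ u ≠ w ∧ v ≠ w)
    (hdeg : ∀ u, 5 * (Fintype.card ι) ^ 2 <
      9 * ((univ : Finset (ι × ι)).filter fun p => G u p.1 p.2).card)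
    (s : ℕ) (hs : 1 ≤ s) :
    ∃ l : List (ι × ι × ι), (∀ e ∈ l, G e.1 e.2.1 e.2.2) ∧
      (∀ v, hcLoad l v ≤ 3 * s + 1) ∧
      ∑ v, ((s : ℤ) - hcLoad l v) ^ 2 ≤ s * Fintype.card ι := by
  let Φ : List (ι × ι × ι) → ℤ := fun l => ∑ v, ((s : ℤ) - hcLoad l v) ^ 2
  have hΦ : ∀ l, 0 ≤ Φ l := fun l => Finset.sum_nonneg fun v _ => sq_nonneg _
  obtain ⟨l, hl, hmin⟩ := WellFounded.has_min (measure fun l => (Φ l).toNat).wf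
    {l : List (ι × ι × ι) | ∀ e ∈ l, G e.1 e.2.1 e.2.2} ⟨[], by simp⟩
  replace hl : ∀ e ∈ l, G e.1 e.2.1 e.2.2 := hl
  have hmin' : ∀ l' : List (ι × ι × ι), (∀ e ∈ l', G e.1 e.2.1 e.2.2) → Φ l ≤ Φ l' := by
    intro l' hl'
    have := hmin l' hl'
    have h1 := hΦ l
    have h2 := hΦ l'
    have h3 : ¬ ((Φ l').toNat < (Φ l).toNat) := this
    omega
  set w : ι → ℤ := fun v => (s : ℤ) - hcLoad l v with hw
  have hwle : ∀ v, w v ≤ s := fun v => by have := hcLoad_nonneg l v; simp [hw]; omega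
  have hadd : ∀ e : ι × ι × ι, G e.1 e.2.1 e.2.2 → w e.1 + w e.2.1 + w e.2.2 ≤ 1 := by
    intro e he
    have h1 := hmin' (e :: l) (by
      intro e' he'
      rcases List.mem_cons.1 he' with h | h
      · rw [h]; exact he
      · exact hl _ h)
    have h2 : Φ (e :: l) = Φ l - 2 * (w e.1 + w e.2.1 + w e.2.2) + 3 := by
      obtain ⟨d1, d2, d3⟩ := hG _ _ _ he
      rw [← hcInd_sum e w, ← hcInd_sq e d1 d2 d3, Finset.mul_sum, ← Finset.sum_sub_distrib,
        ← Finset.sum_add_distrib]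
      apply Finset.sum_congr rfl
      intro v _
      rw [hcLoad_cons]; simp only [hw]; ring
    omega
  have hrem : ∀ e ∈ l, -1 ≤ w e.1 + w e.2.1 + w e.2.2 := by
    intro e he
    have h1 := hmin' (l.erase e) (fun e' he' => hl _ (List.mem_of_mem_erase he'))
    have h2 : Φ (l.erase e) = Φ l + 2 * (w e.1 + w e.2.1 + w e.2.2) + 3 := by
      obtain ⟨d1, d2, d3⟩ := hG _ _ _ (hl e he)
      rw [← hcInd_sum e w, ← hcInd_sq e d1 d2 d3, Finset.mul_sum, ← Finset.sum_add_distrib,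
        ← Finset.sum_add_distrib]
      apply Finset.sum_congr rfl
      intro v _
      simp only [hw]
      rw [hcLoad_erase e l he v]; ring
    omega
  have hsum : 3 * ∑ v, w v < Fintype.card ι := by
    by_contra hcon
    push Not at hcon
    obtain ⟨v0, -, hv0⟩ := Finset.exists_max_image (univ : Finset ι) w univ_nonempty
    have hcpos : 0 < Fintype.card ι := Fintype.card_pos
    have hb : 1 ≤ w v0 := by
      by_contra hb
      have : ∑ v, w v ≤ 0 := Finset.sum_nonpos fun v hv => by have := hv0 v hv; omega
      omega
    have hkc : ∀ v, (((w v0 - w v).toNat : ℕ) : ℤ) = w v0 - w v := fun v => by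
      have := hv0 v (mem_univ _); omega
    have hP := hc_pairs (fun v => (w v0 - w v).toNat) (3 * w v0 - 1).toNat (by omega) (by
      zify
      simp only [hkc, Finset.sum_sub_distrib, Finset.sum_const, Finset.card_univ, nsmul_eq_mul]
      rw [show ((3 * w v0 - 1).toNat : ℤ) = 3 * w v0 - 1 by omega]
      linarith)
    have hd := hdeg v0
    have hsub : ((univ : Finset (ι × ι)).filter fun p => G v0 p.1 p.2) ⊆
      ((univ : Finset (ι × ι)).filter fun p => (3 * w v0 - 1).toNat ≤ 
        (w v0 - w p.1).toNat + (w v0 - w p.2).toNat) := by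
      rintro ⟨u, v⟩ huv
      simp only [mem_filter, mem_univ, true_and] at huv ⊢
      have h1 := hadd (v0, u, v) huv
      have h2 := hkc u
      have h3 := hkc v
      simp only at h1
      omega
    have := Finset.card_le_card hsub
    omega
  refine ⟨l, hl, ?_, ?_⟩
  · intro v
    by_cases hv : ∃ e ∈ l, e.1 = v ∨ e.2.1 = v ∨ e.2.2 = v
    · obtain ⟨e, he, h⟩ := hv
      have h1 := hrem e he
      have h2 := hwle e.1
      have h3 := hwle e.2.1
      have h4 := hwle e.2.2
      have h5 : w v = s - hcLoad l v := rfl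
      rcases h with h | h | h <;> (have := congrArg w h; omega)
    · push Not at hv
      have : hcLoad l v = 0 := by
        unfold hcLoad
        apply List.sum_eq_zero
        intro x hx
        obtain ⟨e, he, rfl⟩ := List.mem_map.1 hx
        have := hv e he
        simp [hcInd, this]
      omega
  · have h1 := hcLoad_sum l w
    have h2 := hcLoad_sum l (fun _ => 1)
    have h3 : -(∑ v, hcLoad l v) ≤ 3 * ∑ v, w v * hcLoad l v := by
      rw [h1]
      simp only [one_mul] at h2
      rw [h2]
      clear h1 h2 hadd hmin hmin' hsum
      clear_value w
      revert hrem
      clear hw hl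
      induction l with
      | nil => simp
      | cons e l ih =>
        intro h
        simp only [List.map_cons, List.sum_cons]
        have := ih (fun e he => h e (by simp [he]))
        have := h e (by simp)
        omega
    have h4 : ∀ v, hcLoad l v = s - w v := fun v => by simp [hw]
    simp only [h4, mul_sub, Finset.sum_sub_distrib, Finset.sum_const, Finset.card_univ, nsmul_eq_mul] at h3
    have h5 : ∑ v, w v * (s:ℤ) = s * ∑ v, w v := by rw [Finset.mul_sum]; simp [mul_comm]
    have h6 : ∑ v, w v * w v = ∑ v, (w v)^2 := by simp [sq]
    rw [h5, h6] at h3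
    have hs' : (1:ℤ) ≤ s := by exact_mod_cast hs
    nlinarith [mul_nonneg (show (0:ℤ) ≤ 3 * s - 1 by omega) (show (0:ℤ) ≤ Fintype.card ι - 3 * ∑ v, w v by omega)]

lemma hc_kst (d : ℝ) (hd : 0 < d) (M : ℕ) : ∃ (X0 : ℕ) (δ : ℝ), 0 < δ ∧
    ∀ (α β : Type) (X : Finset α) (Y : Finset β) (R : α → β → Prop), X0 ≤ X.card →
    d * X.card * Y.card ≤ ((X ×ˢ Y).filter fun p => R p.1 p.2).card →
    ∃ S ⊆ X, S.card = M ∧ δ * Y.card ≤ (Y.filter fun y => ∀ x ∈ S, R x y).card := by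
  obtain ⟨m, hm⟩ := exists_nat_ge (4 * M / d + 1)
  obtain ⟨X0, hX0⟩ := exists_nat_ge (2 * m / d)
  have hmd : 4 * (M:ℝ) ≤ m * d := by
    have : 4 * (M:ℝ) / d ≤ m := by linarith
    rwa [div_le_iff₀ hd] at this
  have hmpos : (1:ℝ) ≤ m := by
    have : 0 ≤ 4 * (M:ℝ) / d := by positivity
    linarith
  refine ⟨max X0 M, d / 4 / 2 ^ m, by positivity, ?_⟩
  intro α β X Y R hX hR
  have hXM : M ≤ X.card := (le_max_right _ _).trans hX
  have hX' : (2 * m : ℝ) ≤ d * X.card := by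
    rw [div_le_iff₀ hd] at hX0
    have : (X0 : ℝ) ≤ X.card := by exact_mod_cast (le_max_left _ _).trans hX
    nlinarith
  rcases Finset.eq_empty_or_nonempty Y with rfl | hY
  · obtain ⟨S, hS, hS'⟩ := Finset.exists_subset_card_eq hXM
    exact ⟨S, hS, hS', by simp⟩
  have hYpos : (0:ℝ) < Y.card := by exact_mod_cast hY.card_pos
  let deg : α → ℕ := fun x => (Y.filter fun y => R x y).card
  have hsum : (((X ×ˢ Y).filter fun p => R p.1 p.2).card : ℝ) = ∑ x ∈ X, (deg x : ℝ) := by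
    rw [← Nat.cast_sum]
    congr 1
    simp only [deg, Finset.card_filter]
    rw [Finset.sum_product]
  have hdegle : ∀ x, (deg x : ℝ) ≤ Y.card := fun x => by
    exact_mod_cast Finset.card_filter_le _ _
  set X' := X.filter fun x => d / 2 * Y.card ≤ deg x with hX'def
  have h1 : ∑ x ∈ X, (deg x : ℝ) ≤ X'.card * Y.card + X.card * (d / 2 * Y.card) := by
    rw [← Finset.sum_filter_add_sum_filter_not X (fun x => d / 2 * Y.card ≤ deg x)]
    apply add_le_add
    · refine (Finset.sum_le_card_nsmul _ _ (Y.card : ℝ) fun x _ => hdegle x).trans ?_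
      rw [nsmul_eq_mul]
    · refine (Finset.sum_le_card_nsmul _ _ (d / 2 * Y.card : ℝ) fun x hx => ?_).trans ?_
      · simp only [mem_filter] at hx; exact le_of_not_ge hx.2
      · rw [nsmul_eq_mul]
        apply mul_le_mul_of_nonneg_right _ (by positivity)
        exact_mod_cast Finset.card_filter_le _ _
  have h2 : (m:ℝ) ≤ X'.card := by
    rw [hsum] at hR
    have : d / 2 * X.card * Y.card ≤ X'.card * Y.card := by nlinarith
    have := le_of_mul_le_mul_right this hYpos
    linarith
  obtain ⟨X1, hX1, hX1c⟩ := Finset.exists_subset_card_eq (show m ≤ X'.card by exact_mod_cast h2)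
  have h3 : m * (d / 2 * Y.card) ≤ ∑ x ∈ X1, (deg x : ℝ) := by
    rw [← hX1c, ← nsmul_eq_mul]
    apply Finset.card_nsmul_le_sum
    intro x hx
    exact (mem_filter.1 (hX1 hx)).2
  let codeg : β → ℕ := fun y => (X1.filter fun x => R x y).card
  have h4 : ∑ x ∈ X1, (deg x : ℝ) = ∑ y ∈ Y, (codeg y : ℝ) := by
    rw [← Nat.cast_sum, ← Nat.cast_sum]
    congr 1
    simp only [deg, codeg, Finset.card_filter]
    rw [Finset.sum_comm]
  set Y' := Y.filter fun y => M ≤ codeg y with hY'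
  have h5 : ∑ y ∈ Y, (codeg y : ℝ) ≤ Y'.card * m + Y.card * M := by
    rw [← Finset.sum_filter_add_sum_filter_not Y (fun y => M ≤ codeg y)]
    apply add_le_add
    · refine (Finset.sum_le_card_nsmul _ _ (m : ℝ) fun x _ => ?_).trans ?_
      · rw [← hX1c]; exact_mod_cast Finset.card_filter_le _ _
      rw [nsmul_eq_mul]
    · refine (Finset.sum_le_card_nsmul _ _ (M : ℝ) fun x hx => ?_).trans ?_
      · simp only [mem_filter] at hx; exact_mod_cast le_of_not_ge hx.2
      · rw [nsmul_eq_mul]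
        apply mul_le_mul_of_nonneg_right _ (by positivity)
        exact_mod_cast Finset.card_filter_le _ _
  have h6 : d / 4 * Y.card ≤ Y'.card := by
    have : d / 4 * Y.card * m ≤ Y'.card * m := by nlinarith
    exact le_of_mul_le_mul_right this (by linarith)
  have h7 : Y' ⊆ (Finset.powersetCard M X1).biUnion fun S => Y.filter fun y => ∀ x ∈ S, R x y := by
    intro y hy
    obtain ⟨hy1, hy2⟩ := mem_filter.1 hy
    obtain ⟨S, hS, hSc⟩ := Finset.exists_subset_card_eq hy2
    simp only [mem_biUnion, mem_powersetCard, mem_filter]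
    exact ⟨S, ⟨hS.trans (Finset.filter_subset _ _), hSc⟩, hy1, fun x hx => (mem_filter.1 (hS hx)).2⟩
  by_contra hcon
  push Not at hcon
  have h8 := (Finset.card_le_card h7).trans Finset.card_biUnion_le
  have h9 : ∑ S ∈ Finset.powersetCard M X1, ((Y.filter fun y => ∀ x ∈ S, R x y).card : ℝ) <
      d / 4 * Y.card := by
    have hne : (Finset.powersetCard M X1).Nonempty := by
      have : 0 < Y'.card := by
        have : (0:ℝ) < Y'.card := lt_of_lt_of_le (by positivity) h6
        exact_mod_cast this
      obtain ⟨y, hy⟩ := Finset.card_pos.1 this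
      obtain ⟨S, hS, _⟩ := mem_biUnion.1 (h7 hy)
      exact ⟨S, hS⟩
    refine lt_of_lt_of_le (Finset.sum_lt_sum_of_nonempty (g := fun _ => d / 4 / 2 ^ m * (Y.card:ℝ)) hne ?_) ?_
    · intro S hS
      rw [mem_powersetCard] at hS
      exact hcon S (hS.1.trans (hX1.trans (Finset.filter_subset _ _))) hS.2
    · rw [Finset.sum_const, nsmul_eq_mul]
      have : ((Finset.powersetCard M X1).card : ℝ) ≤ 2 ^ m := by
        have h := Finset.card_le_card (show Finset.powersetCard M X1 ⊆ X1.powerset from fun S hS => by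
          rw [mem_powersetCard] at hS; exact mem_powerset.2 hS.1)
        rw [Finset.card_powerset, hX1c] at h
        exact_mod_cast h
      calc _ ≤ 2 ^ m * (d / 4 / 2 ^ m * (Y.card:ℝ)) := mul_le_mul_of_nonneg_right this (by positivity)
        _ = _ := by field_simp
  have h10 : (Y'.card : ℝ) ≤ ∑ S ∈ Finset.powersetCard M X1, ((Y.filter fun y => ∀ x ∈ S, R x y).card : ℝ) := by
    exact_mod_cast h8
  linarith

lemma hc_erdos (d : ℝ) (hd : 0 < d) (M : ℕ) : ∃ N0 : ℕ, ∀ N, N0 ≤ N →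
    ∀ (V : Type) (A B C : Finset V) (E : V → V → V → Prop),
    A.card = N → B.card = N → C.card = N →
    d * N ^ 3 ≤ ((A ×ˢ B ×ˢ C).filter fun p => E p.1 p.2.1 p.2.2).card →
    ∃ A' ⊆ A, ∃ B' ⊆ B, ∃ C' ⊆ C, A'.card = M ∧ B'.card = M ∧ C'.card = M ∧
      ∀ a ∈ A', ∀ b ∈ B', ∀ c ∈ C', E a b c := by
  obtain ⟨X0, δ, hδ, h1⟩ := hc_kst d hd M
  obtain ⟨X1, δ', hδ', h2⟩ := hc_kst δ hδ M
  obtain ⟨X2, hX2⟩ := exists_nat_ge (M / δ')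
  refine ⟨max X0 (max X1 X2), ?_⟩
  intro N hN V A B C E hA hB hC hE
  simp only [max_le_iff] at hN
  obtain ⟨A', hA', hA'c, hA'E⟩ := h1 V (V × V) A (B ×ˢ C) (fun a p => E a p.1 p.2)
    (by omega) (by
      rw [card_product, hA, hB, hC]
      refine le_trans (le_of_eq ?_) hE
      push_cast; ring)
  obtain ⟨B', hB', hB'c, hB'E⟩ := h2 V V B C (fun b c => ∀ a ∈ A', E a b c)
    (by omega) (by
      rw [card_product] at hA'E
      push_cast at hA'E
      rw [mul_assoc]; convert hA'E)
  have hM : M ≤ (C.filter fun c => ∀ b ∈ B', ∀ a ∈ A', E a b c).card := by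
    have : (M:ℝ) ≤ δ' * C.card := by
      rw [div_le_iff₀ hδ'] at hX2
      rw [hC]
      have : (X2:ℝ) ≤ N := by exact_mod_cast hN.2.2
      nlinarith
    have h3 := this.trans hB'E
    rw [Nat.cast_le] at h3
    convert h3
  obtain ⟨C', hC', hC'c⟩ := Finset.exists_subset_card_eq hM
  exact ⟨A', hA', B', hB', C', hC'.trans (Finset.filter_subset _ _), hA'c, hB'c, hC'c,
    fun a ha b hb c hc => (mem_filter.1 (hC' hc)).2 b hb a ha⟩

def hcSupp {V : Type} [DecidableEq V] (T : Finset V × Finset V × Finset V) : Finset V :=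
  T.1 ∪ T.2.1 ∪ T.2.2

def hcTiling {V : Type} [DecidableEq V] [Fintype V] (H : Finset (Finset V)) (M m : ℕ)
    (U : Finset V) : Prop :=
  ∃ l : List (Finset V × Finset V × Finset V), l.length = m ∧
    (∀ T ∈ l, T ∈ tripartiteCopies H M ∧ hcSupp T ⊆ U) ∧
    l.Pairwise fun S T => Disjoint (hcSupp S) (hcSupp T)

lemma hcTiling_zero {V : Type} [DecidableEq V] [Fintype V] (H : Finset (Finset V)) (M : ℕ)
    (U : Finset V) : hcTiling H M 0 U := ⟨[], by simp⟩

lemma hcTiling_add {V : Type} [DecidableEq V] [Fintype V] {H : Finset (Finset V)} {M m m' : ℕ}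
    {U U' : Finset V} (h : hcTiling H M m U) (h' : hcTiling H M m' U') (hU : Disjoint U U') :
    hcTiling H M (m + m') (U ∪ U') := by
  obtain ⟨l, h1, h2, h3⟩ := h
  obtain ⟨l', h1', h2', h3'⟩ := h'
  refine ⟨l ++ l', by simp [h1, h1'], ?_, ?_⟩
  · intro T hT
    rcases List.mem_append.1 hT with hT | hT
    · exact ⟨(h2 T hT).1, (h2 T hT).2.trans subset_union_left⟩
    · exact ⟨(h2' T hT).1, (h2' T hT).2.trans subset_union_right⟩
  · rw [List.pairwise_append]
    exact ⟨h3, h3', fun S hS T hT => Finset.disjoint_of_subset_left (h2 S hS).2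
      (Finset.disjoint_of_subset_right (h2' T hT).2 hU)⟩

lemma hcTiling_mono {V : Type} [DecidableEq V] [Fintype V] {H : Finset (Finset V)} {M m : ℕ}
    {U U' : Finset V} (h : hcTiling H M m U) (hU : U ⊆ U') : hcTiling H M m U' := by
  obtain ⟨l, h1, h2, h3⟩ := h
  exact ⟨l, h1, fun T hT => ⟨(h2 T hT).1, (h2 T hT).2.trans hU⟩, h3⟩

lemma hcTiling_one {V : Type} [DecidableEq V] [Fintype V] {H : Finset (Finset V)} {M : ℕ}
    {A B C : Finset V} (hA : A.card = M) (hB : B.card = M) (hC : C.card = M)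
    (hAB : Disjoint A B) (hAC : Disjoint A C) (hBC : Disjoint B C)
    (h : ∀ a ∈ A, ∀ b ∈ B, ∀ c ∈ C, ({a, b, c} : Finset V) ∈ H) :
    hcTiling H M 1 (A ∪ B ∪ C) := by
  refine ⟨[(A, B, C)], rfl, ?_, by simp⟩
  intro T hT
  rw [List.mem_singleton] at hT
  subst hT
  refine ⟨?_, by simp [hcSupp]⟩
  simp only [tripartiteCopies, mem_filter, mem_univ, true_and]
  exact ⟨hA, hB, hC, hAB, hAC, hBC, h⟩

lemma hcTiling_sum {V κ : Type} [DecidableEq V] [Fintype V] {H : Finset (Finset V)} {M : ℕ}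
    (I : Finset κ) (m : κ → ℕ) (U : κ → Finset V) (h : ∀ i ∈ I, hcTiling H M (m i) (U i))
    (hU : ∀ i ∈ I, ∀ j ∈ I, i ≠ j → Disjoint (U i) (U j)) :
    hcTiling H M (∑ i ∈ I, m i) (I.biUnion U) := by
  induction I using Finset.induction_on with
  | empty => simpa using hcTiling_zero H M _
  | insert a I ha ih =>
    rw [Finset.sum_insert ha, Finset.biUnion_insert]
    apply hcTiling_add (h a (by simp)) (ih (fun i hi => h i (by simp [hi])) 
      (fun i hi j hj => hU i (by simp [hi]) j (by simp [hj])))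
    rw [Finset.disjoint_biUnion_right]
    intro i hi
    exact hU a (by simp) i (by simp [hi]) (by rintro rfl; exact ha hi)

lemma hcTiling_complete {V : Type} [DecidableEq V] [Fintype V] {H : Finset (Finset V)} {M : ℕ}
    (k : ℕ) : ∀ A B C : Finset V, k * M ≤ A.card → k * M ≤ B.card → k * M ≤ C.card →
    Disjoint A B → Disjoint A C → Disjoint B C →
    (∀ a ∈ A, ∀ b ∈ B, ∀ c ∈ C, ({a, b, c} : Finset V) ∈ H) →
    hcTiling H M k (A ∪ B ∪ C) := by
  induction k with
  | zero => intros; exact hcTiling_zero H M _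
  | succ k ih =>
    intro A B C hA hB hC hAB hAC hBC h
    have e : (k + 1) * M = k * M + M := by ring
    rw [e] at hA hB hC
    obtain ⟨A', hA', hA'c⟩ := Finset.exists_subset_card_eq (show M ≤ A.card by omega)
    obtain ⟨B', hB', hB'c⟩ := Finset.exists_subset_card_eq (show M ≤ B.card by omega)
    obtain ⟨C', hC', hC'c⟩ := Finset.exists_subset_card_eq (show M ≤ C.card by omega)
    have h1 := hcTiling_one (H := H) hA'c hB'c hC'c
      (disjoint_of_subset_left hA' (disjoint_of_subset_right hB' hAB))
      (disjoint_of_subset_left hA' (disjoint_of_subset_right hC' hAC))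
      (disjoint_of_subset_left hB' (disjoint_of_subset_right hC' hBC))
      (fun a ha b hb c hc => h a (hA' ha) b (hB' hb) c (hC' hc))
    have h2 := ih (A \ A') (B \ B') (C \ C')
      (by rw [card_sdiff_of_subset hA']; omega) (by rw [card_sdiff_of_subset hB']; omega)
      (by rw [card_sdiff_of_subset hC']; omega)
      (disjoint_of_subset_left sdiff_subset (disjoint_of_subset_right sdiff_subset hAB))
      (disjoint_of_subset_left sdiff_subset (disjoint_of_subset_right sdiff_subset hAC))
      (disjoint_of_subset_left sdiff_subset (disjoint_of_subset_right sdiff_subset hBC))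
      (fun a ha b hb c hc => h a (sdiff_subset ha) b (sdiff_subset hb) c (sdiff_subset hc))
    refine hcTiling_mono (hcTiling_add h2 h1 ?_) ?_
    · rw [Finset.disjoint_left] at *
      intro x hx hx'
      simp only [mem_union, mem_sdiff] at hx hx'
      have a1 := @hA' x
      have a2 := @hB' x
      have a3 := @hC' x
      have a4 := @hAB x
      have a5 := @hAC x
      have a6 := @hBC x
      tauto
    · intro x hx
      simp only [mem_union, mem_sdiff] at hx ⊢
      have a1 := @hA' x
      have a2 := @hB' x
      have a3 := @hC' x
      tauto

/-- number of ordered crossing edges -/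
noncomputable def hcE {V : Type} [DecidableEq V] (H : Finset (Finset V)) (A B C : Finset V) : ℕ :=
  ((A ×ˢ B ×ˢ C).filter fun p => ({p.1, p.2.1, p.2.2} : Finset V) ∈ H).card

lemma hc_place {V ι : Type} [DecidableEq V] [Fintype V] [DecidableEq ι] {H : Finset (Finset V)}
    (d : ℝ) (M N N0 X : ℕ) (hN0 : N0 ≤ N)
    (hE : ∀ (A B C : Finset V) (E : V → V → V → Prop),
      A.card = N → B.card = N → C.card = N →
      d / 2 * N ^ 3 ≤ ((A ×ˢ B ×ˢ C).filter fun p => E p.1 p.2.1 p.2.2).card →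
      ∃ A' ⊆ A, ∃ B' ⊆ B, ∃ C' ⊆ C, A'.card = M ∧ B'.card = M ∧ C'.card = M ∧
      ∀ a ∈ A', ∀ b ∈ B', ∀ c ∈ C', E a b c)
    (P : ι → Finset V) (hP : ∀ u, (P u).card = N) (hPd : ∀ u v, u ≠ v → Disjoint (P u) (P v))
    (hX : 3 * (X : ℝ) ≤ d / 2 * N)
    (l : List (ι × ι × ι))
    (hl : ∀ e ∈ l, e.1 ≠ e.2.1 ∧ e.1 ≠ e.2.2 ∧ e.2.1 ≠ e.2.2 ∧
      d * N ^ 3 ≤ hcE H (P e.1) (P e.2.1) (P e.2.2))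
    (hload : ∀ v, M * hcLoad l v ≤ X) :
    ∃ U, hcTiling H M l.length U ∧ ∀ v, (((P v ∩ U).card : ℕ) : ℤ) ≤ M * hcLoad l v := by
  induction l with
  | nil => exact ⟨∅, hcTiling_zero H M _, by simp [hcLoad]⟩
  | cons e l ih =>
    obtain ⟨U, hU, hUc⟩ := ih (fun e he => hl e (by simp [he])) (fun v => by
      have h1 := hload v
      rw [hcLoad_cons] at h1
      have := mul_nonneg (show (0:ℤ) ≤ M by positivity) (hcInd_nonneg e v)
      linarith)
    obtain ⟨d1, d2, d3, hd⟩ := hl e (by simp)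
    obtain ⟨u, v, w⟩ := e
    simp only at d1 d2 d3 hd
    have hUX : ∀ v, (P v ∩ U).card ≤ X := by
      intro t
      have h1 := hload t
      rw [hcLoad_cons] at h1
      have := hUc t
      have := mul_nonneg (show (0:ℤ) ≤ M by positivity) (hcInd_nonneg (u,v,w) t)
      zify
      linarith
    obtain ⟨A', hA', B', hB', C', hC', hA'c, hB'c, hC'c, hcomp⟩ := hE (P u) (P v) (P w)
      (fun a b c => ({a, b, c} : Finset V) ∈ H ∧ a ∉ U ∧ b ∉ U ∧ c ∉ U) (hP _) (hP _) (hP _) (by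
        have hsub : ((P u ×ˢ P v ×ˢ P w).filter fun p => ({p.1, p.2.1, p.2.2} : Finset V) ∈ H) ⊆
          ((P u ×ˢ P v ×ˢ P w).filter fun p => ({p.1, p.2.1, p.2.2} : Finset V) ∈ H ∧
            p.1 ∉ U ∧ p.2.1 ∉ U ∧ p.2.2 ∉ U) ∪ 
          (((P u ∩ U) ×ˢ P v ×ˢ P w) ∪ (P u ×ˢ (P v ∩ U) ×ˢ P w ∪ P u ×ˢ P v ×ˢ (P w ∩ U))) := by
          rintro ⟨a, b, c⟩ h
          simp only [mem_filter, mem_union, mem_product, mem_inter] at h ⊢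
          tauto
        have h1 := (Finset.card_le_card hsub).trans (Finset.card_union_le _ _)
        have h2 := Finset.card_union_le ((P u ∩ U) ×ˢ P v ×ˢ P w) (P u ×ˢ (P v ∩ U) ×ˢ P w ∪ P u ×ˢ P v ×ˢ (P w ∩ U))
        have h3 := Finset.card_union_le (P u ×ˢ (P v ∩ U) ×ˢ P w) (P u ×ˢ P v ×ˢ (P w ∩ U))
        simp only [card_product, hP] at h2 h3
        have h4 := Nat.mul_le_mul_right (N * N) (hUX u)
        have h5 := Nat.mul_le_mul_right (N * N) (hUX v)
        have h6 := Nat.mul_le_mul_right (N * N) (hUX w)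
        have h7 : hcE H (P u) (P v) (P w) ≤ ((P u ×ˢ P v ×ˢ P w).filter fun p => ({p.1, p.2.1, p.2.2} : Finset V) ∈ H ∧
            p.1 ∉ U ∧ p.2.1 ∉ U ∧ p.2.2 ∉ U).card + 3 * X * (N * N) := by
          unfold hcE
          nlinarith
        have h8 : (hcE H (P u) (P v) (P w) : ℝ) ≤ ((P u ×ˢ P v ×ˢ P w).filter fun p => ({p.1, p.2.1, p.2.2} : Finset V) ∈ H ∧
            p.1 ∉ U ∧ p.2.1 ∉ U ∧ p.2.2 ∉ U).card + 3 * X * (N * N) := by exact_mod_cast h7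
        have h9 := mul_le_mul_of_nonneg_right hX (show (0:ℝ) ≤ N * N by positivity)
        have h10 : d / 2 * N ^ 3 ≤ (((P u ×ˢ P v ×ˢ P w).filter fun p => ({p.1, p.2.1, p.2.2} : Finset V) ∈ H ∧
            p.1 ∉ U ∧ p.2.1 ∉ U ∧ p.2.2 ∉ U).card : ℝ) := by nlinarith
        convert h10)
    have hT := hcTiling_one (H := H) hA'c hB'c hC'c
      (disjoint_of_subset_left hA' (disjoint_of_subset_right hB' (hPd _ _ d1)))
      (disjoint_of_subset_left hA' (disjoint_of_subset_right hC' (hPd _ _ d2)))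
      (disjoint_of_subset_left hB' (disjoint_of_subset_right hC' (hPd _ _ d3)))
      (fun a ha b hb c hc => (hcomp a ha b hb c hc).1)
    by_cases hM : M = 0
    · subst hM
      rw [Finset.card_eq_zero] at hA'c hB'c hC'c
      subst hA'c hB'c hC'c
      refine ⟨U ∪ (∅ ∪ ∅ ∪ ∅), hcTiling_add hU hT (by simp), ?_⟩
      simpa using hUc
    have nA : A'.Nonempty := Finset.card_pos.1 (by omega)
    have nB : B'.Nonempty := Finset.card_pos.1 (by omega)
    have nC : C'.Nonempty := Finset.card_pos.1 (by omega)
    obtain ⟨a0, ha0⟩ := nA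
    obtain ⟨b0, hb0⟩ := nB
    obtain ⟨c0, hc0⟩ := nC
    refine ⟨U ∪ (A' ∪ B' ∪ C'), hcTiling_add hU hT ?_, ?_⟩
    · rw [Finset.disjoint_right]
      intro x hx
      simp only [mem_union] at hx
      rcases hx with (hx | hx) | hx
      · exact (hcomp x hx b0 hb0 c0 hc0).2.1
      · exact (hcomp a0 ha0 x hx c0 hc0).2.2.1
      · exact (hcomp a0 ha0 b0 hb0 x hx).2.2.2
    · intro t
      have key : ∀ (y : ι) (S : Finset V), S ⊆ P y → S.card = M →
          (((P t ∩ S).card : ℕ) : ℤ) ≤ M * (if y = t then 1 else 0) := by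
        intro y S hS hSc
        split_ifs with hy
        · rw [mul_one, ← hSc]
          exact_mod_cast Finset.card_le_card inter_subset_right
        · have : P t ∩ S = ∅ := by
            rw [← Finset.disjoint_iff_inter_eq_empty]
            exact disjoint_of_subset_right hS (hPd _ _ (Ne.symm hy))
          simp [this]
      have k1 := key u A' hA' hA'c
      have k2 := key v B' hB' hB'c
      have k3 := key w C' hC' hC'c
      have k4 := hUc t
      rw [hcLoad_cons]
      simp only [hcInd, inter_union_distrib_left]
      have c1 := Finset.card_union_le (P t ∩ U) (P t ∩ A' ∪ P t ∩ B' ∪ P t ∩ C')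
      have c2 := Finset.card_union_le (P t ∩ A' ∪ P t ∩ B') (P t ∩ C')
      have c3 := Finset.card_union_le (P t ∩ A') (P t ∩ B')
      zify at c1 c2 c3
      rw [mul_add, mul_add, mul_add]
      linarith

lemma hc_deg2 {V : Type} [DecidableEq V] [Fintype V] (H : Finset (Finset V))
    (hH : ∀ e ∈ H, e.card = 3) (a : V) :
    2 * (H.filter fun e => a ∈ e).card ≤
      ((univ : Finset (V × V)).filter fun p => ({a, p.1, p.2} : Finset V) ∈ H).card := by
  rw [Finset.card_eq_sum_card_fiberwise (f := fun p : V × V => ({a, p.1, p.2} : Finset V))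
    (t := H.filter fun e => a ∈ e)]
  · rw [mul_comm, ← smul_eq_mul]
    apply Finset.card_nsmul_le_sum
    intro e he
    obtain ⟨he, hae⟩ := mem_filter.1 he
    have h2 : (e.erase a).card = 2 := by rw [Finset.card_erase_of_mem hae, hH e he]
    obtain ⟨b, c, hbc, hbc'⟩ := Finset.card_eq_two.1 h2
    have he' : e = {a, b, c} := by rw [← hbc', Finset.insert_erase hae]
    have hsub : ({(b, c), (c, b)} : Finset (V × V)) ⊆
      {x ∈ (univ : Finset (V × V)).filter fun p => ({a, p.1, p.2} : Finset V) ∈ H |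
        ({a, x.1, x.2} : Finset V) = e} := by
      intro x hx
      simp only [mem_insert, mem_singleton] at hx
      simp only [mem_filter, mem_univ, true_and]
      rcases hx with rfl | rfl
      · exact ⟨by rw [← he']; exact he, he'.symm⟩
      · have : ({a, c, b} : Finset V) = e := by rw [he', Finset.pair_comm]
        exact ⟨by rw [this]; exact he, this⟩
    refine le_trans (le_of_eq ?_) (Finset.card_le_card hsub)
    rw [Finset.card_pair]
    intro h
    exact hbc (congrArg Prod.fst h)
  · intro p hp
    simp only [coe_filter, mem_univ, true_and, Set.mem_setOf_eq, mem_filter] at hp ⊢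
    exact ⟨hp, by simp⟩

lemma hc_E_sum {V : Type} [DecidableEq V] (H : Finset (Finset V)) (A B C : Finset V) :
    hcE H A B C = ∑ a ∈ A, ((B ×ˢ C).filter fun p => ({a, p.1, p.2} : Finset V) ∈ H).card := by
  unfold hcE
  simp only [Finset.card_filter]
  rw [Finset.sum_product]

lemma hc_E_le {V : Type} [DecidableEq V] (H : Finset (Finset V)) (A B C : Finset V) :
    hcE H A B C ≤ A.card * (B.card * C.card) := by
  unfold hcE
  refine (Finset.card_filter_le _ _).trans ?_
  simp [card_product]

lemma hc_link {V ι : Type} [DecidableEq V] [Fintype V] [DecidableEq ι] [Fintype ι]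
    (H : Finset (Finset V)) (hH : ∀ e ∈ H, e.card = 3) (N : ℕ)
    (P : ι → Finset V) (hP : ∀ u, (P u).card = N) 
    (hW : (univ \ univ.biUnion P).card ≤ N) (hcN : Fintype.card ι * N ≤ Fintype.card V) (u : ι)
    (a : V) :
    2 * (H.filter fun e => a ∈ e).card ≤ 5 * N * Fintype.card V +
      ∑ q ∈ (univ : Finset (ι × ι)).filter (fun q => u ≠ q.1 ∧ u ≠ q.2 ∧ q.1 ≠ q.2),
        ((P q.1 ×ˢ P q.2).filter fun p => ({a, p.1, p.2} : Finset V) ∈ H).card := by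
  refine (hc_deg2 H hH a).trans ?_
  set W := univ \ univ.biUnion P with hWd
  set n := Fintype.card V
  have hsub : ((univ : Finset (V × V)).filter fun p => ({a, p.1, p.2} : Finset V) ∈ H) ⊆
      ((W ×ˢ univ ∪ univ ×ˢ W) ∪ (P u ×ˢ univ ∪ univ ×ˢ P u) ∪ univ.biUnion fun v => P v ×ˢ P v) ∪
      ((univ : Finset (ι × ι)).filter (fun q => u ≠ q.1 ∧ u ≠ q.2 ∧ q.1 ≠ q.2)).biUnion
        fun q => (P q.1 ×ˢ P q.2).filter fun p => ({a, p.1, p.2} : Finset V) ∈ H := by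
    rintro ⟨b, c⟩ hbc
    simp only [mem_filter, mem_univ, true_and] at hbc
    by_cases hb : b ∈ W
    · simp [hb]
    by_cases hc : c ∈ W
    · simp [hc]
    simp only [hWd, mem_sdiff, mem_univ, true_and, not_not, mem_biUnion] at hb hc
    obtain ⟨v, hv⟩ := hb
    obtain ⟨w, hw⟩ := hc
    by_cases h1 : u = v
    · subst h1; simp [hv]
    by_cases h2 : u = w
    · subst h2; simp [hw]
    by_cases h3 : v = w
    · subst h3
      rw [mem_union, mem_union]
      left; right
      simp only [mem_biUnion, mem_univ, true_and, mem_product]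
      exact ⟨v, hv, hw⟩
    rw [mem_union]
    right
    simp only [mem_biUnion, mem_filter, mem_univ, true_and, mem_product]
    exact ⟨(v, w), ⟨h1, h2, h3⟩, ⟨hv, hw⟩, hbc⟩
  refine (Finset.card_le_card hsub).trans ((Finset.card_union_le _ _).trans ?_)
  apply add_le_add _ Finset.card_biUnion_le
  have c1 := Finset.card_union_le ((W ×ˢ (univ : Finset V) ∪ univ ×ˢ W) ∪ (P u ×ˢ univ ∪ univ ×ˢ P u))
    (univ.biUnion fun v => P v ×ˢ P v)
  have c2 := Finset.card_union_le (W ×ˢ (univ : Finset V) ∪ univ ×ˢ W) (P u ×ˢ univ ∪ univ ×ˢ P u)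
  have c3 := Finset.card_union_le (W ×ˢ (univ : Finset V)) (univ ×ˢ W)
  have c4 := Finset.card_union_le (P u ×ˢ (univ : Finset V)) (univ ×ˢ P u)
  have c5 : (univ.biUnion fun v => P v ×ˢ P v).card ≤ Fintype.card ι * (N * N) := by
    refine Finset.card_biUnion_le.trans ?_
    simp [card_product, hP]
  simp only [card_product, hP, Finset.card_univ] at c3 c4
  have c6 : Fintype.card ι * (N * N) ≤ n * N := by nlinarith
  have c7 : W.card * n ≤ N * n := Nat.mul_le_mul_right _ hW
  have c8 : n * N = N * n := mul_comm _ _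
  have c9 : n * W.card = W.card * n := mul_comm _ _
  have c10 : 5 * N * n = 5 * (N * n) := by ring
  change _ ≤ W.card * n + n * W.card at c3
  change _ ≤ N * n + n * N at c4
  omega

lemma hc_degree {V ι : Type} [DecidableEq V] [Fintype V] [DecidableEq ι] [Fintype ι]
    (H : Finset (Finset V)) (hH : ∀ e ∈ H, e.card = 3) (N : ℕ) (hN : 1 ≤ N) (lam : ℝ)
    (hlam : 0 < lam)
    (hn : 4 * (3 * (5 / 9 + lam) + 5 * N) < 3 * lam * Fintype.card V)
    (hdeg : ∀ v : V, (5 / 9 + lam) * ((Fintype.card V - 1).choose 2 : ℝ) ≤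
      ((H.filter fun e => v ∈ e).card : ℝ))
    (P : ι → Finset V) (hP : ∀ u, (P u).card = N) 
    (hW : (univ \ univ.biUnion P).card ≤ N) (hcN : Fintype.card ι * N ≤ Fintype.card V) (u : ι) :
    5 * (Fintype.card ι) ^ 2 < 9 * ((univ : Finset (ι × ι)).filter fun p =>
      u ≠ p.1 ∧ u ≠ p.2 ∧ p.1 ≠ p.2 ∧ lam / 4 * N ^ 3 ≤ hcE H (P u) (P p.1) (P p.2)).card := by
  set n := Fintype.card V with hnd
  set c := Fintype.card ι with hcd
  set D := (univ : Finset (ι × ι)).filter (fun q => u ≠ q.1 ∧ u ≠ q.2 ∧ q.1 ≠ q.2) with hD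
  set Γ := (univ : Finset (ι × ι)).filter fun p =>
      u ≠ p.1 ∧ u ≠ p.2 ∧ p.1 ≠ p.2 ∧ lam / 4 * N ^ 3 ≤ hcE H (P u) (P p.1) (P p.2) with hΓ
  have hnpos : (0:ℝ) < n := by
    by_contra h
    have : 0 < 4 * (3 * (5 / 9 + lam) + 5 * (N:ℝ)) := by positivity
    have h0 : (n:ℝ) = 0 := le_antisymm (not_lt.1 h) (by positivity)
    rw [h0] at hn
    linarith
  have hn1 : 1 ≤ n := by exact_mod_cast hnpos
  have hch : ((n - 1).choose 2 : ℝ) = ((n:ℝ) - 1) * (n - 2) / 2 := by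
    rw [Nat.cast_choose_two, Nat.cast_sub hn1]
    push_cast; ring
  have h1 : ∑ a ∈ P u, (2 * ((H.filter fun e => a ∈ e).card : ℝ)) ≤
      N * (5 * N * n) + ∑ q ∈ D, (hcE H (P u) (P q.1) (P q.2) : ℝ) := by
    have := Finset.sum_le_sum fun a (_ : a ∈ P u) => hc_link H hH N P hP hW hcN u a
    rw [Finset.sum_add_distrib, Finset.sum_const, hP, smul_eq_mul, Finset.sum_comm] at this
    simp only [← hc_E_sum] at this
    exact_mod_cast this
  have h2 : N * ((5 / 9 + lam) * (((n:ℝ) - 1) * (n - 2))) ≤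
      ∑ a ∈ P u, (2 * ((H.filter fun e => a ∈ e).card : ℝ)) := by
    rw [← hP u, ← nsmul_eq_mul]
    apply Finset.card_nsmul_le_sum
    intro a _
    have := hdeg a
    rw [hch] at this
    linarith
  have h3 : ∑ q ∈ D, (hcE H (P u) (P q.1) (P q.2) : ℝ) ≤ 
      ∑ q ∈ (univ : Finset (ι × ι)), (lam / 4 * N ^ 3 : ℝ) + ∑ q ∈ Γ, (N ^ 3 : ℝ) := by
    have e1 : ∑ q ∈ Γ, (N ^ 3 : ℝ) = ∑ q : ι × ι, if q ∈ Γ then (N ^ 3 : ℝ) else 0 := by simp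
    rw [e1, ← Finset.sum_add_distrib]
    refine le_trans (Finset.sum_le_sum (fun q hq => ?_)) (Finset.sum_le_sum_of_subset_of_nonneg (subset_univ D) (fun q _ _ => ?_))
    · split_ifs with h
      · have h4 := hc_E_le H (P u) (P q.1) (P q.2)
        simp only [hP] at h4
        have h5 : (hcE H (P u) (P q.1) (P q.2) : ℝ) ≤ N * (N * N) := by exact_mod_cast h4
        have : 0 ≤ lam / 4 * (N:ℝ) ^ 3 := by positivity
        nlinarith
      · simp only [hD, hΓ, mem_filter, mem_univ, true_and] at hq h
        have : ¬ (lam / 4 * N ^ 3 ≤ (hcE H (P u) (P q.1) (P q.2) : ℝ)) := by tauto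
        push Not at this
        linarith
    · split_ifs <;> positivity
  rw [Finset.sum_const, Finset.sum_const, Finset.card_univ, Fintype.card_prod, nsmul_eq_mul, nsmul_eq_mul] at h3
  push_cast at h3
  have hcN' : (c:ℝ) * N ≤ n := by exact_mod_cast hcN
  have hNpos : (0:ℝ) < N := by exact_mod_cast hN
  have hcc : ((c:ℝ) * N) ^ 2 ≤ n ^ 2 := by gcongr
  have h4 : N * ((5 / 9 + lam) * (((n:ℝ) - 1) * (n - 2))) ≤ N * (5 * N * n + (lam / 4) * (c * N)^2 + Γ.card * N ^ 2) := by
    refine (h2.trans (h1.trans (add_le_add le_rfl h3))).trans (le_of_eq ?_)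
    rw [← hcd]; ring
  have h5 := le_of_mul_le_mul_left h4 hNpos
  have h6 : 5 / 9 * (n:ℝ) ^ 2 < Γ.card * N ^ 2 := by
    have h7 := mul_lt_mul_of_pos_right hn hnpos
    have h8 : lam / 4 * (c * N : ℝ)^2 ≤ lam / 4 * n ^ 2 := by gcongr
    nlinarith
  have h9 : (5 / 9 * (c:ℝ) ^ 2) * N ^ 2 < Γ.card * N ^ 2 := by
    refine lt_of_le_of_lt ?_ h6
    nlinarith
  have h10 := lt_of_mul_lt_mul_right h9 (by positivity)
  have h11 : (5 * (c:ℝ)^2) < 9 * Γ.card := by linarith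
  exact_mod_cast h11

lemma hc_abs {V ι : Type} [DecidableEq V] [Fintype V] [DecidableEq ι] [Fintype ι] [Nonempty ι]
    (H : Finset (Finset V)) (hH : ∀ e ∈ H, e.card = 3) (lam κ : ℝ) (hlam : 0 < lam) (hκ : 0 < κ)
    (M q s τ : ℕ) (hM : 1 ≤ M) (hs : 1 ≤ s) (hsκ : 1 ≤ s * κ ^ 2) (hq1 : 1 ≤ q)
    (hq : 3 * (3 * (s:ℝ) + 1) ≤ lam / 8 * q)
    (hE : ∀ (A B C : Finset V) (E : V → V → V → Prop),
      A.card = q * M → B.card = q * M → C.card = q * M →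
      lam / 4 / 2 * ((q * M : ℕ) : ℝ) ^ 3 ≤ ((A ×ˢ B ×ˢ C).filter fun p => E p.1 p.2.1 p.2.2).card →
      ∃ A' ⊆ A, ∃ B' ⊆ B, ∃ C' ⊆ C, A'.card = M ∧ B'.card = M ∧ C'.card = M ∧
      ∀ a ∈ A', ∀ b ∈ B', ∀ c ∈ C', E a b c)
    (hn : 4 * (3 * (5 / 9 + lam) + 5 * ((q * M : ℕ) : ℝ)) < 3 * lam * Fintype.card V)
    (hdeg : ∀ v : V, (5 / 9 + lam) * ((Fintype.card V - 1).choose 2 : ℝ) ≤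
      ((H.filter fun e => v ∈ e).card : ℝ))
    (P : ι → Finset V) (hP : ∀ u, (P u).card = q * M)
    (hPd : ∀ u v, u ≠ v → Disjoint (P u) (P v))
    (hW : (univ \ univ.biUnion P).card ≤ q * M)
    (hcN : Fintype.card ι * (q * M) ≤ Fintype.card V)
    (T : Fin τ × Fin 3 → ι) (hT : Function.Injective T)
    (hcomp : ∀ k, ∀ a ∈ P (T (k, 0)), ∀ b ∈ P (T (k, 1)), ∀ c ∈ P (T (k, 2)),
      ({a, b, c} : Finset V) ∈ H) :
    ∃ m : ℕ, hcTiling H M m univ ∧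
      (s:ℝ) * Fintype.card ι - 4 * κ * s * Fintype.card ι + 3 * τ * ((q:ℝ) - s) ≤ 3 * m := by
  obtain ⟨l, hl, hl1, hl2⟩ := hc_matching
    (fun u v w => u ≠ v ∧ u ≠ w ∧ v ≠ w ∧ lam / 4 * ((q * M : ℕ) : ℝ) ^ 3 ≤ hcE H (P u) (P v) (P w))
    (fun u v w h => ⟨h.1, h.2.1, h.2.2.1⟩)
    (fun u => by
      have := hc_degree H hH (q * M) (Nat.mul_pos hq1 hM) lam hlam hn hdeg P hP hW hcN u
      convert this) s hs
  obtain ⟨U, hU, hUc⟩ := hc_place (H := H) (lam / 4) M (q * M) 0 (M * (3 * s + 1)) (by simp) hE P hP hPd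
    (by
      push_cast
      have := mul_le_mul_of_nonneg_right hq (show (0:ℝ) ≤ M by positivity)
      linarith) l hl (fun v => by
      push_cast
      exact mul_le_mul_of_nonneg_left (hl1 v) (by positivity))
  set w : ι → ℤ := fun v => |(s:ℤ) - hcLoad l v| with hw
  let mk : Fin τ → ℕ := fun k => ((q:ℤ) - s - (w (T (k,0)) + w (T (k,1)) + w (T (k,2)))).toNat
  have hsz : ∀ k j, mk k * M ≤ (P (T (k, j)) \ U).card := by
    intro k j
    have h1 : (P (T (k,j)) \ U).card + (P (T (k,j)) ∩ U).card = q * M := by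
      rw [Finset.card_sdiff_add_card_inter, hP]
    have h2 := hUc (T (k,j))
    by_cases h0 : mk k = 0
    · rw [h0]; simp
    have h3 : (mk k : ℤ) ≤ q - hcLoad l (T (k,j)) := by
      have n0 : 0 ≤ w (T (k,0)) := abs_nonneg _
      have n1 : 0 ≤ w (T (k,1)) := abs_nonneg _
      have n2 : 0 ≤ w (T (k,2)) := abs_nonneg _
      have h4 : w (T (k,j)) ≤ w (T (k,0)) + w (T (k,1)) + w (T (k,2)) := by
        fin_cases j <;> simp only [Fin.zero_eta, Fin.mk_one, Fin.reduceFinMk] <;> linarith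
      have h5 : hcLoad l (T (k,j)) - s ≤ w (T (k,j)) := by
        simp only [hw]; rw [abs_sub_comm]; exact le_abs_self _
      have : (mk k : ℤ) = (q:ℤ) - s - (w (T (k,0)) + w (T (k,1)) + w (T (k,2))) := by
        simp only [mk] at h0 ⊢; omega
      omega
    have h6 := mul_le_mul_of_nonneg_right h3 (show (0:ℤ) ≤ M by positivity)
    zify at h1 ⊢
    nlinarith
  have hTd : ∀ x y, x ≠ y → Disjoint (P (T x) \ U) (P (T y) \ U) := fun x y hxy =>
    disjoint_of_subset_left sdiff_subset (disjoint_of_subset_right sdiff_subset (hPd _ _ (fun h => hxy (hT h))))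
  have htil : ∀ k, hcTiling H M (mk k) ((P (T (k,0)) \ U) ∪ (P (T (k,1)) \ U) ∪ (P (T (k,2)) \ U)) := by
    intro k
    apply hcTiling_complete _ _ _ _ (hsz k 0) (hsz k 1) (hsz k 2)
    · exact hTd _ _ (by simp)
    · exact hTd _ _ (by simp)
    · exact hTd _ _ (by simp)
    · intro a ha b hb c hc
      exact hcomp k a (sdiff_subset ha) b (sdiff_subset hb) c (sdiff_subset hc)
  have hold := hcTiling_sum (H := H) (M := M) (univ : Finset (Fin τ)) mk _ (fun k _ => htil k) (by
    intro i _ j _ hij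
    have hne : ∀ a b, (i, a) ≠ ((j, b) : Fin τ × Fin 3) := by
      intro a b h; exact hij (congrArg Prod.fst h)
    simp only [disjoint_union_left, disjoint_union_right]
    refine ⟨⟨⟨⟨?_, ?_⟩, ?_⟩, ⟨⟨?_, ?_⟩, ?_⟩⟩, ⟨⟨?_, ?_⟩, ?_⟩⟩ <;> exact hTd _ _ (hne _ _))
  refine ⟨l.length + ∑ k, mk k, hcTiling_mono (hcTiling_add hU hold ?_) (subset_univ _), ?_⟩
  · rw [Finset.disjoint_biUnion_right]
    intro k _
    simp only [disjoint_union_right]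
    exact ⟨⟨disjoint_sdiff, disjoint_sdiff⟩, disjoint_sdiff⟩
  · set c := Fintype.card ι
    have hlen : ∑ v, hcLoad l v = 3 * l.length := by
      have := hcLoad_sum l (fun _ => 1)
      simp only [one_mul] at this
      rw [this]; simp [mul_comm]
    have hx : ((s:ℤ) * c - ∑ v, w v) ≤ 3 * l.length := by
      rw [← hlen]
      have : ∑ v : ι, ((s:ℤ) - w v) ≤ ∑ v, hcLoad l v := by
        apply Finset.sum_le_sum
        intro v _
        have : (s:ℤ) - hcLoad l v ≤ w v := le_abs_self _
        linarith
      rw [Finset.sum_sub_distrib, Finset.sum_const, Finset.card_univ, nsmul_eq_mul, mul_comm] at this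
      exact this
    have hold' : (τ : ℤ) * (q - s) - ∑ v, w v ≤ ∑ k, (mk k : ℤ) := by
      have h1 : ∑ k : Fin τ, ((q:ℤ) - s - (w (T (k,0)) + w (T (k,1)) + w (T (k,2)))) ≤ ∑ k, (mk k : ℤ) :=
        Finset.sum_le_sum fun k _ => Int.self_le_toNat _
      have h2 : ∑ k : Fin τ, (w (T (k,0)) + w (T (k,1)) + w (T (k,2))) ≤ ∑ v, w v := by
        have e : ∑ k : Fin τ, (w (T (k,0)) + w (T (k,1)) + w (T (k,2))) = ∑ x : Fin τ × Fin 3, w (T x) := by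
          rw [Fintype.sum_prod_type]
          apply Finset.sum_congr rfl
          intro k _
          rw [Fin.sum_univ_three]
        rw [e, ← Finset.sum_image (f := w) (g := T) (s := univ) (fun x _ y _ h => hT h)]
        exact Finset.sum_le_univ_sum_of_nonneg fun v => abs_nonneg _
      rw [Finset.sum_sub_distrib, Finset.sum_const, Finset.card_univ, Fintype.card_fin, nsmul_eq_mul] at h1
      linarith
    have hwsum : ((∑ v, w v : ℤ) : ℝ) ≤ κ * s * c := by
      have h1 : ∀ v, (w v : ℝ) ≤ (κ * s + ((w v)^2 : ℤ) / (κ * s)) / 2 := by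
        intro v
        have hks : 0 < κ * s := by
          have : (0:ℝ) < s := by exact_mod_cast hs
          positivity
        rw [le_div_iff₀ (by norm_num), ← sub_nonneg]
        have : κ * s + ((w v)^2 : ℤ) / (κ * s) - w v * 2 = (κ * s - w v)^2 / (κ * s) := by
          push_cast; field_simp; ring
        rw [this]; positivity
      have h2 : ((∑ v, (w v)^2 : ℤ) : ℝ) ≤ s * c := by
        have : ∑ v, (w v)^2 ≤ (s:ℤ) * c := by simpa only [hw, sq_abs] using hl2
        exact_mod_cast this
      push_cast at h2 ⊢
      refine (Finset.sum_le_sum fun v _ => h1 v).trans ?_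
      rw [← Finset.sum_div, Finset.sum_add_distrib, ← Finset.sum_div, Finset.sum_const, Finset.card_univ, nsmul_eq_mul]
      have hks : 0 < κ * s := by
          have : (0:ℝ) < s := by exact_mod_cast hs
          positivity
      have h3 : (∑ v, (((w v)^2 : ℤ):ℝ)) / (κ * s) ≤ κ * s * c := by
        push_cast
        rw [div_le_iff₀ hks]
        refine h2.trans ?_
        have : (0:ℝ) ≤ s * c := by positivity
        nlinarith
      change ((c:ℝ) * (κ * s) + _) / 2 ≤ _
      linarith
    have hx' : ((s:ℝ) * c - ((∑ v, w v : ℤ) : ℝ)) ≤ 3 * l.length := by exact_mod_cast hx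
    have hold'' : (τ : ℝ) * (q - s) - ((∑ v, w v : ℤ) : ℝ) ≤ ((∑ k, mk k : ℕ) : ℝ) := by exact_mod_cast hold'
    rw [Nat.cast_add]
    linarith

lemma hc_chunks {V : Type} [DecidableEq V] (R : Finset V) (N k : ℕ) (h : k * N ≤ R.card) :
    ∃ F : Fin k → Finset V, (∀ i, F i ⊆ R ∧ (F i).card = N) ∧ ∀ i j, i ≠ j → Disjoint (F i) (F j) := by
  induction k generalizing R with
  | zero => exact ⟨fun _ => ∅, fun i => i.elim0, fun i => i.elim0⟩
  | succ k ih =>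
    have e : (k + 1) * N = k * N + N := by ring
    obtain ⟨S, hS, hSc⟩ := Finset.exists_subset_card_eq (show N ≤ R.card by omega)
    obtain ⟨F, hF, hFd⟩ := ih (R \ S) (by rw [card_sdiff_of_subset hS]; omega)
    refine ⟨Fin.cons S F, ?_, ?_⟩
    · intro i
      refine Fin.cases ?_ (fun i => ?_) i
      · simpa using ⟨hS, hSc⟩
      · simpa using ⟨(hF i).1.trans sdiff_subset, (hF i).2⟩
    · have hd : ∀ i, Disjoint S (F i) := fun i =>
        disjoint_of_subset_right (hF i).1 disjoint_sdiff
      intro i j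
      refine Fin.cases ?_ (fun i => ?_) i <;> refine Fin.cases ?_ (fun j => ?_) j
      · simp
      · intro _; simpa using hd j
      · intro _; simpa using (hd i).symm
      · intro hij; simpa using hFd i j (fun h => hij (by rw [h]))

lemma hc_clusters {V : Type} [DecidableEq V] [Fintype V] {H : Finset (Finset V)} {N τ : ℕ}
    (hN : 1 ≤ N) (h : hcTiling H N τ univ) :
    ∃ (k : ℕ) (P : (Fin τ × Fin 3) ⊕ Fin k → Finset V), (∀ u, (P u).card = N) ∧
      (∀ u v, u ≠ v → Disjoint (P u) (P v)) ∧ (univ \ univ.biUnion P).card ≤ N ∧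
      (∀ t, ∀ a ∈ P (.inl (t, 0)), ∀ b ∈ P (.inl (t, 1)), ∀ c ∈ P (.inl (t, 2)),
        ({a, b, c} : Finset V) ∈ H) := by
  obtain ⟨l, hl, hl1, hl2⟩ := h
  subst hl
  let p : Fin l.length × Fin 3 → Finset V := fun x =>
    ![(l.get x.1).1, (l.get x.1).2.1, (l.get x.1).2.2] x.2
  have hcop : ∀ t : Fin l.length, _ := fun t => (mem_filter.1 (hl1 (l.get t) (List.get_mem _ _)).1).2
  have hdis : ∀ i j : Fin l.length, i ≠ j → Disjoint (hcSupp (l.get i)) (hcSupp (l.get j)) := by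
    intro i j hij
    rcases lt_or_gt_of_ne hij with h | h
    · exact List.pairwise_iff_get.1 hl2 i j h
    · exact (List.pairwise_iff_get.1 hl2 j i h).symm
  have hpsub : ∀ x, p x ⊆ hcSupp (l.get x.1) := by
    rintro ⟨t, j⟩
    fin_cases j
    · exact fun x hx => mem_union_left _ (mem_union_left _ hx)
    · exact fun x hx => mem_union_left _ (mem_union_right _ hx)
    · exact fun x hx => mem_union_right _ hx
  have hpd : ∀ x y, x ≠ y → Disjoint (p x) (p y) := by
    rintro ⟨t, j⟩ ⟨t', j'⟩ hxy
    by_cases htt : t = t'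
    · subst htt
      obtain ⟨-, -, -, h1, h2, h3, -⟩ := hcop t
      have hjj : j ≠ j' := fun h => hxy (by rw [h])
      fin_cases j <;> fin_cases j' <;> first | exact absurd rfl hjj | exact h1 | exact h2 | exact h3 | exact h1.symm | exact h2.symm | exact h3.symm
    · exact disjoint_of_subset_left (hpsub _) (disjoint_of_subset_right (hpsub _) (hdis _ _ htt))
  set R := (univ : Finset V) \ univ.biUnion p with hR
  obtain ⟨F, hF, hFd⟩ := hc_chunks R N (R.card / N) (Nat.div_mul_le_self _ _)
  have hpF : ∀ x i, Disjoint (p x) (F i) := by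
    intro x i
    apply disjoint_of_subset_right (hF i).1
    rw [hR]
    exact disjoint_of_subset_left (Finset.subset_biUnion_of_mem p (mem_univ x)) disjoint_sdiff
  refine ⟨R.card / N, Sum.elim p F, ?_, ?_, ?_, ?_⟩
  · rintro (⟨t, j⟩ | i)
    · obtain ⟨h1, h2, h3, -⟩ := hcop t
      fin_cases j
      · exact h1
      · exact h2
      · exact h3
    · exact (hF i).2
  · rintro (x | i) (y | j) huv
    · exact hpd x y (fun h => huv (by rw [h]))
    · exact hpF x j
    · exact (hpF y i).symm
    · exact hFd i j (fun h => huv (by rw [h]))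
  · have hsub : (univ \ univ.biUnion (Sum.elim p F)) ⊆ R \ univ.biUnion F := by
      intro x hx
      simp only [hR, mem_sdiff, mem_univ, true_and, mem_biUnion, not_exists] at hx ⊢
      exact ⟨fun y => hx (.inl y), fun i => hx (.inr i)⟩
    refine (Finset.card_le_card hsub).trans ?_
    rw [Finset.card_sdiff_of_subset (Finset.biUnion_subset.2 fun i _ => (hF i).1),
      Finset.card_biUnion (fun i _ j _ hij => hFd i j hij)]
    simp only [(hF _).2, Finset.sum_const, Finset.card_univ, Fintype.card_fin, smul_eq_mul]
    have := Nat.div_add_mod R.card N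
    have h2 := Nat.mod_lt R.card (show N > 0 by omega)
    rw [mul_comm] at this
    omega
  · intro t a ha b hb c hc
    obtain ⟨-, -, -, -, -, -, h⟩ := hcop t
    exact h a ha b hb c hc

def hcS (lam r : ℝ) : Prop := ∀ M : ℕ, 1 ≤ M → ∃ n0 : ℕ, ∀ n, n0 ≤ n →
  ∀ (V : Type) [DecidableEq V] [Fintype V], Fintype.card V = n →
    ∀ H : Finset (Finset V), (∀ e ∈ H, e.card = 3) →
    (∀ v : V, (5 / 9 + lam) * ((n - 1).choose 2 : ℝ) ≤
      ((H.filter fun e => v ∈ e).card : ℝ)) →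
    ∃ m : ℕ, hcTiling H M m univ ∧ (1 - r) * n ≤ 3 * M * m

set_option maxHeartbeats 1600000 in
lemma hc_step (lam ρ r : ℝ) (hlam : 0 < lam) (hρ : 0 < ρ) (hρ1 : ρ ≤ 1) (hr : ρ ≤ r)
    (h : hcS lam r) : hcS lam (r - min (lam / 96) 1 * ρ / 4) := by
  intro M hM
  set η := min (lam / 96) 1 with hη
  have hη0 : 0 < η := lt_min (by positivity) one_pos
  have hη1 : η ≤ 1 := min_le_right _ _
  have hη2 : η ≤ lam / 96 := min_le_left _ _
  set κ := ρ / 16 with hκ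
  have hκ0 : 0 < κ := by positivity
  obtain ⟨N0, hN0⟩ := hc_erdos (lam / 4 / 2) (by positivity) M
  obtain ⟨q0, hq0⟩ := exists_nat_ge (2 / (η * κ ^ 2))
  set q := max (max N0 q0) 1 with hq
  have hq1 : 1 ≤ q := le_max_right _ _
  have hqN : N0 ≤ q := (le_max_left _ _).trans (le_max_left _ _)
  have hqq : q0 ≤ q := (le_max_right _ _).trans (le_max_left _ _)
  have hqκ : 2 ≤ η * q * κ ^ 2 := by
    rw [div_le_iff₀ (by positivity)] at hq0
    have : (q0:ℝ) ≤ q := by exact_mod_cast hqq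
    have h2 : (q0:ℝ) * (η * κ^2) ≤ q * (η * κ^2) := by gcongr
    linarith
  have hqpos : (0:ℝ) < q := by exact_mod_cast hq1
  have hκ1 : κ ^ 2 ≤ 1 := by
    have : κ ≤ 1 := by rw [hκ]; linarith
    nlinarith
  have hηq : 2 ≤ η * q := by
    have : 0 ≤ η * q := by positivity
    nlinarith
  set s := ⌊η * q⌋₊ with hs
  have hs_le : (s:ℝ) ≤ η * q := Nat.floor_le (by positivity)
  have hs_ge : η * q / 2 ≤ s := by
    have := Nat.lt_floor_add_one (η * q)
    linarith
  have hs1 : 1 ≤ s := Nat.le_floor (by push_cast; linarith)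
  have hs1' : (1:ℝ) ≤ s := by exact_mod_cast hs1
  have hsq : (s:ℝ) ≤ q := by nlinarith
  set N := q * M with hN
  have hN1 : 1 ≤ N := Nat.mul_pos hq1 hM
  obtain ⟨n1, hn1⟩ := h N hN1
  obtain ⟨n2, hn2⟩ := exists_nat_gt (4 * (3 * (5 / 9 + lam) + 5 * (N:ℝ)) / (3 * lam))
  obtain ⟨n3, hn3⟩ := exists_nat_ge (4 * N / ρ)
  refine ⟨max n1 (max n2 n3), ?_⟩
  intro n hn V _ _ hV H hH hdeg
  simp only [max_le_iff] at hn
  subst hV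
  set n := Fintype.card V with hnV
  have hA : 4 * (3 * (5 / 9 + lam) + 5 * (N:ℝ)) < 3 * lam * n := by
    rw [div_lt_iff₀ (by positivity)] at hn2
    have : (n2:ℝ) ≤ n := by exact_mod_cast hn.2.1
    nlinarith
  have hB : 4 * (N:ℝ) ≤ ρ * n := by
    rw [div_le_iff₀ hρ] at hn3
    have : (n3:ℝ) ≤ n := by exact_mod_cast hn.2.2
    nlinarith
  obtain ⟨τ, hτ, hτn⟩ := hn1 n hn.1 V rfl H hH hdeg
  obtain ⟨k, P, hP, hPd, hW, hcomp⟩ := hc_clusters hN1 hτ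
  have hbi : (univ.biUnion P).card = Fintype.card ((Fin τ × Fin 3) ⊕ Fin k) * N := by
    rw [Finset.card_biUnion (fun i _ j _ hij => hPd i j hij)]
    simp only [hP, Finset.sum_const, Finset.card_univ, smul_eq_mul]
  have hWc : (univ \ univ.biUnion P).card + (univ.biUnion P).card = n := by
    rw [Finset.card_sdiff_add_card_eq_card (subset_univ _), Finset.card_univ]
  have hcN : Fintype.card ((Fin τ × Fin 3) ⊕ Fin k) * N ≤ n := by omega
  set c := Fintype.card ((Fin τ × Fin 3) ⊕ Fin k) with hc
  have hnc : (n:ℝ) ≤ c * N + N := by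
    have : n ≤ c * N + N := by omega
    exact_mod_cast this
  have hN1' : (1:ℝ) ≤ N := by exact_mod_cast hN1
  have hne : Nonempty ((Fin τ × Fin 3) ⊕ Fin k) := by
    rw [← Fintype.card_pos_iff]
    by_contra h0
    have h00 : c = 0 := by omega
    rw [h00] at hnc
    push_cast at hnc
    have : (0:ℝ) ≤ n := by positivity
    nlinarith
  obtain ⟨m, hm, hmc⟩ := hc_abs H hH lam κ hlam hκ0 M q s τ hM hs1 (by nlinarith) hq1 (by nlinarith)
    (fun A B C E hA hB hC hE => hN0 N (by rw [hN]; nlinarith) V A B C E hA hB hC hE)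
    hA hdeg P hP hPd hW hcN Sum.inl Sum.inl_injective hcomp
  refine ⟨m, hm, ?_⟩
  rw [← hc] at hmc
  have hNq : (N:ℝ) = q * M := by rw [hN]; push_cast; ring
  have hM0 : (0:ℝ) < M := by exact_mod_cast hM
  have hnn : (0:ℝ) ≤ n := by positivity
  have e1 : (1 - 4 * κ) * s * (c * N) + (q - s) * (3 * N * τ) ≤ q * (3 * M * m) := by
    have := mul_le_mul_of_nonneg_left hmc (show (0:ℝ) ≤ q * M by positivity)
    rw [hNq]
    nlinarith
  have e2 : (1 - ρ / 4) * n ≤ c * N := by linarith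
  have hκ4 : 4 * κ = ρ / 4 := by rw [hκ]; ring
  have e3 : (1 - ρ / 2) * n ≤ (1 - 4 * κ) * (c * N) := by
    rw [hκ4]
    have := mul_le_mul_of_nonneg_left e2 (show (0:ℝ) ≤ 1 - ρ / 4 by linarith)
    nlinarith [mul_nonneg (sq_nonneg (ρ / 4)) hnn]
  have e4 := mul_le_mul_of_nonneg_left e3 (show (0:ℝ) ≤ s by positivity)
  have e5 := mul_le_mul_of_nonneg_left hτn (show (0:ℝ) ≤ q - s by linarith)
  have e6 : s * ((1 - ρ / 2) * n) + (q - s) * ((1 - r) * n) ≤ q * (3 * M * m) := by linarith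
  have e7 : s * (n * (ρ / 2)) ≤ s * (n * (r - ρ / 2)) := by
    gcongr; linarith
  have e8 : η * q / 2 * (n * (ρ / 2)) ≤ s * (n * (ρ / 2)) := by gcongr
  have e9 : q * ((1 - (r - η * ρ / 4)) * n) ≤ q * (3 * M * m) := by linarith
  exact le_of_mul_le_mul_left e9 hqpos

lemma hcS_mono (lam r r' : ℝ) (hr : r ≤ r') (h : hcS lam r) : hcS lam r' := by
  intro M hM
  obtain ⟨n0, h0⟩ := h M hM
  refine ⟨n0, fun n hn V _ _ hV H hH hdeg => ?_⟩
  obtain ⟨m, hm, hmn⟩ := h0 n hn V hV H hH hdeg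
  refine ⟨m, hm, le_trans ?_ hmn⟩
  gcongr

lemma hcS_all (lam ρ : ℝ) (hlam : 0 < lam) (hρ : 0 < ρ) (hρ1 : ρ ≤ 1) : hcS lam ρ := by
  set δ := min (lam / 96) 1 * ρ / 4 with hδ
  have hδ0 : 0 < δ := by
    have : 0 < min (lam / 96) 1 := lt_min (by positivity) one_pos
    positivity
  have key : ∀ k : ℕ, hcS lam (max ρ (1 - k * δ)) := by
    intro k
    induction k with
    | zero =>
      intro M hM
      refine ⟨0, fun n hn V _ _ hV H hH hdeg => ⟨0, hcTiling_zero _ _ _, ?_⟩⟩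
      have : max ρ (1 - ((0:ℕ):ℝ) * δ) = 1 := by simp [hρ1]
      rw [this]; simp
    | succ k ih =>
      have h1 := hc_step lam ρ _ hlam hρ hρ1 (le_max_left _ _) ih
      refine hcS_mono _ _ _ ?_ h1
      push_cast
      rcases max_cases ρ (1 - k * δ) with ⟨h, h'⟩ | ⟨h, h'⟩
      · rw [h]; exact le_max_of_le_left (by linarith)
      · rw [h]; exact le_max_of_le_right (by linarith)
  obtain ⟨k, hk⟩ := exists_nat_ge (1 / δ)
  rw [div_le_iff₀ hδ0] at hk
  have := key k
  rwa [max_eq_left (by linarith)] at this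

/-- Cover Lemma: for every `ρ, λ > 0` and integer `L ≥ 1` there is `n₀` such that every
3-graph on `n ≥ n₀` vertices with minimum vertex degree at least `(5/9+λ)·C(n-1,2)`
contains a family of pairwise vertex-disjoint copies of `K_{L,L,L}` covering at least
`(1-ρ)n` vertices. -/
theorem stmt_14 (ρ lam : ℝ) (hρ : 0 < ρ) (hlam : 0 < lam) (L : ℕ) (hL : 1 ≤ L) :
    ∃ n₀ : ℕ, ∀ n : ℕ, n₀ ≤ n →
    ∀ (V : Type) [DecidableEq V] [Fintype V], Fintype.card V = n →
    ∀ H : Finset (Finset V), (∀ e ∈ H, e.card = 3) →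
    (∀ v : V, (5 / 9 + lam) * ((n - 1).choose 2 : ℝ) ≤
      ((H.filter fun e => v ∈ e).card : ℝ)) →
    ∃ (m : ℕ) (Q : Fin m → Finset V × Finset V × Finset V),
      (∀ k, Q k ∈ tripartiteCopies H L) ∧
      (∀ k l, k ≠ l →
        Disjoint ((Q k).1 ∪ (Q k).2.1 ∪ (Q k).2.2) ((Q l).1 ∪ (Q l).2.1 ∪ (Q l).2.2)) ∧
      (1 - ρ) * (n : ℝ) ≤
        (((Finset.univ : Finset (Fin m)).biUnion fun k =>
          (Q k).1 ∪ (Q k).2.1 ∪ (Q k).2.2).card : ℝ) := by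
  obtain ⟨n0, h0⟩ := hcS_all lam (min ρ 1) hlam (lt_min hρ one_pos) (min_le_right _ _) L hL
  refine ⟨n0, fun n hn V _ _ hV H hH hdeg => ?_⟩
  obtain ⟨m, ⟨l, hl, hl1, hl2⟩, hmn⟩ := h0 n hn V hV H hH hdeg
  have hdis : ∀ i j : Fin l.length, i ≠ j → Disjoint (hcSupp (l.get i)) (hcSupp (l.get j)) := by
    intro i j hij
    rcases lt_or_gt_of_ne hij with h | h
    · exact List.pairwise_iff_get.1 hl2 i j h
    · exact (List.pairwise_iff_get.1 hl2 j i h).symm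
  refine ⟨l.length, l.get, fun k => (hl1 _ (List.get_mem _ _)).1, hdis, ?_⟩
  have hcard : ((Finset.univ : Finset (Fin l.length)).biUnion fun k =>
          (l.get k).1 ∪ (l.get k).2.1 ∪ (l.get k).2.2).card = 3 * L * m := by
    change (univ.biUnion fun k => hcSupp (l.get k)).card = _
    rw [Finset.card_biUnion (fun i _ j _ hij => hdis i j hij)]
    have : ∀ k : Fin l.length, (hcSupp (l.get k)).card = 3 * L := by
      intro k
      unfold hcSupp
      obtain ⟨a, b, c, d1, d2, d3, -⟩ := (mem_filter.1 (hl1 (l.get k) (List.get_mem _ _)).1).2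
      rw [Finset.card_union_of_disjoint (Finset.disjoint_union_left.2 ⟨d2, d3⟩),
        Finset.card_union_of_disjoint d1, a, b, c]
      ring
    simp only [this, Finset.sum_const, Finset.card_univ, Fintype.card_fin, smul_eq_mul, hl]
    ring
  rw [hcard]
  push_cast
  refine le_trans ?_ hmn
  have := min_le_left ρ 1
  gcongr
end
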